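/- Let Γ be a regular nicely distance-balanced graph with valency k = 3, diameter d ≥ 3 and γ(Γ) = d+1. Then Γ is isomorphic to the 3-dimensional hypercube graph Q_3 (the graph on the 8 binary strings of length 3, two strings being adjacent if they differ in exactly one coordinate). -/

import Mathlib

open SimpleGraph Finset

/-- `W_{u,v}`: the set of vertices strictly closer to `u` than to `v`. -/
noncomputable def ndbW {V : Type*} [Fintype V] (G : SimpleGraph V) (u v : V) : Finset V :=
  Finset.univ.filter fun x => G.dist x u < G.dist x v

/-- `D^i_j(u,v)`: the set of vertices at distance `i` from `u` and `j` from `v`. -/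
noncomputable def ndbD {V : Type*} [Fintype V] (G : SimpleGraph V) (u v : V) (i j : ℕ) : Finset V :=
  Finset.univ.filter fun x => G.dist x u = i ∧ G.dist x v = j

/-- `G` is nicely distance-balanced with constant `γ`. -/
def IsNDB {V : Type*} [Fintype V] (G : SimpleGraph V) (γ : ℕ) : Prop :=
  ∀ u v : V, G.Adj u v → (ndbW G u v).card = γ ∧ (ndbW G v u).card = γ

/-- `G` has diameter `d`. -/
def HasDiam {V : Type*} [Fintype V] (G : SimpleGraph V) (d : ℕ) : Prop :=
  (∀ u v : V, G.dist u v ≤ d) ∧ ∃ u v : V, G.dist u v = d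

/-- The 3-dimensional hypercube graph `Q₃`: vertices are binary strings of
length 3, two strings being adjacent iff they differ in exactly one
coordinate. -/
def cubeQ3 : SimpleGraph (Fin 3 → Bool) :=
  SimpleGraph.fromRel fun x y => (Finset.univ.filter fun i => x i ≠ y i).card = 1

/-!
A triangle with pendant neighbours cannot occur: the vertices equally far from two of its corners
are equally far from all three, then are shown not to exist, and the unique vertex that lies beyond
each pendant neighbour without being nearest to its own corner would pair up the three corners.

Along a geodesic `p 0, …, p d`, the set `W` of an edge `p (i + 1) p i` contains the `d - i` vertices
`p j` with `i < j`, so only `i + 1` of its vertices are not on the geodesic. For `d ≥ 4` this forces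
the geodesic to fork at `p 2`, which is impossible for `d ≥ 5`; for `d = 4` the graph around the
geodesic is determined far enough to exhibit six vertices in some `W` of size five.

For `d = 3`, each neighbour `u` of `v` has exactly one vertex at distance two from `u` and three
from `v`, and these vertices coincide, so that antipodes are unique. Counting at a vertex leaves at
most eleven vertices, hence eight or ten since cubic graphs have even order. With ten vertices, the
vertex set would be partitioned into `4`-cycles, and with eight the antipodal map identifies the
graph with the cube.
-/

section Distance

variable {V : Type*} {G : SimpleGraph V} {x y z : V}

theorem dist_le_dist_add_one (h : G.Adj x y) (z : V) : G.dist z y ≤ G.dist z x + 1 := by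
  have := h.diff_dist_adj (u := z)
  omega

theorem dist_le_dist_add_one' (h : G.Adj x y) (z : V) : G.dist y z ≤ G.dist x z + 1 := by
  simpa only [G.dist_comm (v := z)] using dist_le_dist_add_one h z

theorem exists_adj_dist_add_one_eq (hG : G.Connected) (hne : z ≠ x) :
    ∃ y, G.Adj x y ∧ G.dist z y + 1 = G.dist z x := by
  obtain ⟨p, hp⟩ := hG.exists_walk_length_eq_dist x z
  cases p with
  | nil => exact absurd rfl hne
  | @cons _ y _ hxy q =>
    have hq : G.dist y z ≤ q.length := dist_le q
    have hstep := dist_le_dist_add_one hxy.symm z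
    rw [Walk.length_cons, G.dist_comm] at hp
    rw [G.dist_comm] at hq
    exact ⟨y, hxy, by omega⟩

theorem eq_or_exists_adj_of_dist_le_add_one (hG : G.Connected) {k : ℕ}
    (h : G.dist z x ≤ k + 1) : z = x ∨ ∃ y, G.Adj x y ∧ G.dist z y ≤ k := by
  refine or_iff_not_imp_left.mpr fun hne => ?_
  obtain ⟨y, hxy, hy⟩ := exists_adj_dist_add_one_eq hG hne
  exact ⟨y, hxy, by omega⟩

theorem eq_or_adj_of_dist_le_one (hG : G.Connected) (h : G.dist z x ≤ 1) : z = x ∨ G.Adj x z := by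
  refine or_iff_not_imp_left.mpr fun hne => (dist_eq_one_iff_adj.mp ?_).symm
  have := hG.pos_dist_of_ne hne
  omega

theorem exists_adj_adj_of_dist_eq_two (hG : G.Connected) (h : G.dist x z = 2) :
    ∃ y, G.Adj x y ∧ G.Adj y z := by
  rw [G.dist_comm] at h
  obtain ⟨y, hxy, hy⟩ := exists_adj_dist_add_one_eq hG (z := z) (x := x)
    (by rintro rfl; rw [dist_self] at h; omega)
  exact ⟨y, hxy, (dist_eq_one_iff_adj.mp (by omega)).symm⟩

theorem not_adj_of_adj_of_adj (hG : G.CliqueFree 3) (hxy : G.Adj x y) (hxz : G.Adj x z) :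
    ¬G.Adj y z := fun hyz => by
  classical exact hG {x, y, z} (is3Clique_triple_iff.mpr ⟨hxy, hxz, hyz⟩)

theorem dist_eq_two_of_adj_of_adj (hG : G.CliqueFree 3) (hxy : G.Adj x y) (hyz : G.Adj y z)
    (hne : x ≠ z) : G.dist x z = 2 := by
  have hle : G.dist x z ≤ 2 := dist_le (.cons hxy (.cons hyz .nil))
  have hpos : 0 < G.dist x z := (hxy.reachable.trans hyz.reachable).pos_dist_of_ne hne
  have h1 : G.dist x z ≠ 1 := fun h =>
    not_adj_of_adj_of_adj hG hxy.symm hyz (dist_eq_one_iff_adj.mp h)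
  omega

end Distance

/-- `a`, `b` and `c` are distinct and are exactly the neighbours of `x` in `G`. -/
structure IsNeighborTriple {V : Type*} (G : SimpleGraph V) (x a b c : V) : Prop where
  ne₁₂ : a ≠ b
  ne₁₃ : a ≠ c
  ne₂₃ : b ≠ c
  adj_iff : ∀ y, G.Adj x y ↔ y = a ∨ y = b ∨ y = c

namespace IsNeighborTriple

variable {V : Type*} {G : SimpleGraph V} {x a b c : V}

theorem swap (h : IsNeighborTriple G x a b c) : IsNeighborTriple G x b a c where
  ne₁₂ := h.ne₁₂.symm
  ne₁₃ := h.ne₂₃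
  ne₂₃ := h.ne₁₃
  adj_iff y := by rw [h.adj_iff]; tauto

theorem rotate (h : IsNeighborTriple G x a b c) : IsNeighborTriple G x b c a where
  ne₁₂ := h.ne₂₃
  ne₁₃ := h.ne₁₂.symm
  ne₂₃ := h.ne₁₃.symm
  adj_iff y := by rw [h.adj_iff]; tauto

theorem adj₁ (h : IsNeighborTriple G x a b c) : G.Adj x a := (h.adj_iff a).mpr (.inl rfl)

theorem adj₂ (h : IsNeighborTriple G x a b c) : G.Adj x b := h.rotate.adj₁

theorem adj₃ (h : IsNeighborTriple G x a b c) : G.Adj x c := h.rotate.adj₂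

end IsNeighborTriple

section Cubic

variable {V : Type*} {G : SimpleGraph V} {x a b c : V} [Fintype (G.neighborSet x)]

theorem exists_isNeighborTriple (h : G.degree x = 3) : ∃ a b c, IsNeighborTriple G x a b c := by
  classical
  obtain ⟨a, b, c, hab, hac, hbc, hN⟩ := card_eq_three.mp h
  refine ⟨a, b, c, hab, hac, hbc, fun y => ?_⟩
  rw [← mem_neighborFinset, hN]
  simp only [mem_insert, mem_singleton]

theorem exists_isNeighborTriple_of_adj (h : G.degree x = 3) (ha : G.Adj x a) :
    ∃ b c, IsNeighborTriple G x a b c := by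
  obtain ⟨p, q, r, hT⟩ := exists_isNeighborTriple h
  obtain rfl | rfl | rfl := (hT.adj_iff a).mp ha
  · exact ⟨q, r, hT⟩
  · exact ⟨r, p, hT.rotate⟩
  · exact ⟨p, q, hT.rotate.rotate⟩

theorem exists_isNeighborTriple_of_adj_of_adj (h : G.degree x = 3) (ha : G.Adj x a)
    (hb : G.Adj x b) (hab : a ≠ b) : ∃ c, IsNeighborTriple G x a b c := by
  obtain ⟨q, r, hT⟩ := exists_isNeighborTriple_of_adj h ha
  obtain rfl | rfl | rfl := (hT.adj_iff b).mp hb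
  · exact absurd rfl hab
  · exact ⟨r, hT⟩
  · exact ⟨q, hT.rotate.rotate.swap⟩

theorem isNeighborTriple_of_adj (h : G.degree x = 3) (ha : G.Adj x a) (hb : G.Adj x b)
    (hc : G.Adj x c) (hab : a ≠ b) (hac : a ≠ c) (hbc : b ≠ c) : IsNeighborTriple G x a b c := by
  obtain ⟨r, hT⟩ := exists_isNeighborTriple_of_adj_of_adj h ha hb hab
  obtain rfl | rfl | rfl := (hT.adj_iff c).mp hc
  · exact absurd rfl hac
  · exact absurd rfl hbc
  · exact hT

end Cubic

/-- `G` is a connected cubic graph that is nicely distance-balanced with constant `γ`. -/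
structure IsCubicNDB {V : Type*} [Fintype V] (G : SimpleGraph V) [DecidableRel G.Adj] (γ : ℕ) :
    Prop where
  connected : G.Connected
  regular : G.IsRegularOfDegree 3
  ndb : IsNDB G γ

theorem mem_ndbW {V : Type*} [Fintype V] {G : SimpleGraph V} {u v x : V} :
    x ∈ ndbW G u v ↔ G.dist x u < G.dist x v := by
  simp only [ndbW, mem_filter_univ]

/-- The set of neighbours of `x` that are closer to `z` than `x` is; its size is the number often
written `c(z, x)`. -/
noncomputable def closerNeighbors {V : Type*} [Fintype V] (G : SimpleGraph V)
    [DecidableRel G.Adj] (z x : V) : Finset V :=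
  {y ∈ G.neighborFinset x | G.dist z y < G.dist z x}

section CloserNeighbors

variable {V : Type*} [Fintype V] {G : SimpleGraph V} [DecidableRel G.Adj] {x y z : V} {γ : ℕ}

theorem mem_closerNeighbors :
    y ∈ closerNeighbors G z x ↔ G.Adj x y ∧ G.dist z y < G.dist z x := by
  simp only [closerNeighbors, mem_filter, mem_neighborFinset]

theorem closerNeighbors_self (x : V) : closerNeighbors G x x = ∅ := by
  simp only [closerNeighbors, dist_self, not_lt_zero, filter_false]

theorem card_closerNeighbors_pos (hG : G.Connected) (hne : z ≠ x) :
    0 < #(closerNeighbors G z x) := by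
  obtain ⟨y, hxy, hy⟩ := exists_adj_dist_add_one_eq hG hne
  exact card_pos.mpr ⟨y, mem_closerNeighbors.mpr ⟨hxy, by omega⟩⟩

theorem sum_card_closerNeighbors (x : V) :
    ∑ z, #(closerNeighbors G z x) = ∑ y ∈ G.neighborFinset x, #(ndbW G y x) :=
  sum_card_bipartiteAbove_eq_sum_card_bipartiteBelow fun z y => G.dist z y < G.dist z x

namespace IsCubicNDB

theorem card_ndbW (H : IsCubicNDB G γ) (h : G.Adj x y) : #(ndbW G x y) = γ := (H.ndb x y h).1

theorem card_add_sum_excess [DecidableEq V] (H : IsCubicNDB G γ) (x : V) :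
    Fintype.card V + ∑ z ∈ univ.erase x, (#(closerNeighbors G z x) - 1) = 3 * γ + 1 := by
  have hsum : ∑ z ∈ univ.erase x, #(closerNeighbors G z x) = 3 * γ := by
    have hW : ∀ y ∈ G.neighborFinset x, #(ndbW G y x) = γ := fun y hy =>
      H.card_ndbW ((mem_neighborFinset _ _ _).mp hy).symm
    rw [sum_erase _ (by rw [closerNeighbors_self, card_empty]), sum_card_closerNeighbors,
      sum_const_nat hW, card_neighborFinset_eq_degree, H.regular]
  have hone : ∑ z ∈ univ.erase x, (#(closerNeighbors G z x) - 1 + 1) = 3 * γ := by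
    rw [← hsum]
    refine sum_congr rfl fun z hz => Nat.sub_add_cancel ?_
    exact card_closerNeighbors_pos H.connected (ne_of_mem_erase hz)
  rw [sum_add_distrib, sum_const, smul_eq_mul, mul_one, card_erase_of_mem (mem_univ x),
    card_univ] at hone
  have : 0 < Fintype.card V := Fintype.card_pos_iff.mpr ⟨x⟩
  omega

theorem card_add_card_closerNeighbors_le (H : IsCubicNDB G γ) (hne : z ≠ x) :
    Fintype.card V + #(closerNeighbors G z x) ≤ 3 * γ + 2 := by
  classical
  have hle := single_le_sum_of_canonicallyOrdered (f := fun z => #(closerNeighbors G z x) - 1)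
    (mem_erase.mpr ⟨hne, mem_univ z⟩)
  have := H.card_add_sum_excess x
  omega

end IsCubicNDB

end CloserNeighbors

/-- `u`, `v` and `w` form a triangle, and their neighbours off the triangle are `a`, `b` and `c`
respectively. -/
structure IsPendantTriangle {V : Type*} (G : SimpleGraph V) (u v w a b c : V) : Prop where
  left : IsNeighborTriple G u v w a
  mid : IsNeighborTriple G v w u b
  right : IsNeighborTriple G w u v c

/-- `x` is strictly closer to `u` than to `v` and `w`. -/
def IsNearest {V : Type*} (G : SimpleGraph V) (u v w x : V) : Prop :=
  G.dist x u < G.dist x v ∧ G.dist x u < G.dist x w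

namespace IsPendantTriangle

section Basic

variable {V : Type*} {G : SimpleGraph V} {u v w a b c x y z : V}

theorem rotate (T : IsPendantTriangle G u v w a b c) : IsPendantTriangle G v w u b c a :=
  ⟨T.mid, T.right, T.left⟩

theorem swap (T : IsPendantTriangle G u v w a b c) : IsPendantTriangle G v u w b a c :=
  ⟨T.mid.swap, T.left.swap, T.right.swap⟩

theorem dist_bounds (T : IsPendantTriangle G u v w a b c) (x : V) :
    (G.dist x u ≤ G.dist x v + 1 ∧ G.dist x v ≤ G.dist x u + 1) ∧
      (G.dist x v ≤ G.dist x w + 1 ∧ G.dist x w ≤ G.dist x v + 1) ∧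
        G.dist x w ≤ G.dist x u + 1 ∧ G.dist x u ≤ G.dist x w + 1 :=
  have key {p q : V} (h : G.Adj p q) : G.dist x p ≤ G.dist x q + 1 ∧ G.dist x q ≤ G.dist x p + 1 :=
    ⟨dist_le_dist_add_one h.symm x, dist_le_dist_add_one h x⟩
  ⟨key T.left.adj₁, key T.mid.adj₁, key T.right.adj₁⟩

theorem dist_add_one_eq (T : IsPendantTriangle G u v w a b c) (hG : G.Connected) (hx : x ≠ u)
    (hv : G.dist x u ≤ G.dist x v) (hw : G.dist x u ≤ G.dist x w) :
    G.dist x a + 1 = G.dist x u := by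
  obtain ⟨y, huy, hy⟩ := exists_adj_dist_add_one_eq hG hx
  obtain rfl | rfl | rfl := (T.left.adj_iff y).mp huy
  · omega
  · omega
  · exact hy

theorem ne_of_dist_eq (T : IsPendantTriangle G u v w a b c) (h : G.dist x u = G.dist x v) :
    x ≠ u := by
  rintro rfl
  rw [SimpleGraph.dist_self, dist_eq_one_iff_adj.mpr T.left.adj₁] at h
  exact absurd h zero_ne_one

end Basic

variable {V : Type*} [Fintype V] {G : SimpleGraph V} [DecidableRel G.Adj] {γ : ℕ}
variable {u v w a b c x y z r s : V}

theorem card_ndbW_sdiff [DecidableEq V] (H : IsCubicNDB G γ)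
    (T : IsPendantTriangle G u v w a b c) : #(ndbW G a u \ ndbW G u v) = 1 := by
  have hinter : ndbW G u v ∩ ndbW G a u = (ndbW G u v).erase u := by
    ext x
    simp only [mem_inter, mem_erase, mem_ndbW]
    refine ⟨fun ⟨hv, ha⟩ => ⟨?_, hv⟩, fun ⟨hx, hv⟩ => ⟨hv, ?_⟩⟩
    · rintro rfl
      rw [SimpleGraph.dist_self] at ha
      omega
    · have := T.dist_bounds x
      have := T.dist_add_one_eq H.connected hx (by omega) (by omega)
      omega
  have hu : u ∈ ndbW G u v := by
    rw [mem_ndbW, dist_self, dist_eq_one_iff_adj.mpr T.left.adj₁]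
    exact one_pos
  have hpos : 0 < #(ndbW G u v) := card_pos.mpr ⟨u, hu⟩
  rw [card_sdiff, hinter, card_erase_of_mem hu]
  rw [H.card_ndbW T.left.adj₁] at hpos ⊢
  rw [H.card_ndbW T.left.adj₃.symm]
  omega

theorem exists_lt_and_le (H : IsCubicNDB G γ) (T : IsPendantTriangle G u v w a b c) :
    ∃ x, G.dist x a < G.dist x u ∧ G.dist x v ≤ G.dist x u := by
  classical
  obtain ⟨x, hx⟩ := card_eq_one.mp (T.card_ndbW_sdiff H)
  have := mem_singleton_self x
  rw [← hx, mem_sdiff, mem_ndbW, mem_ndbW, not_lt] at this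
  exact ⟨x, this⟩

theorem eq_of_lt_of_le (H : IsCubicNDB G γ) (T : IsPendantTriangle G u v w a b c)
    (hxa : G.dist x a < G.dist x u) (hxv : G.dist x v ≤ G.dist x u)
    (hya : G.dist y a < G.dist y u) (hyv : G.dist y v ≤ G.dist y u) : x = y := by
  classical
  refine card_le_one.mp (T.card_ndbW_sdiff H).le x ?_ y ?_ <;>
  · rw [mem_sdiff, mem_ndbW, mem_ndbW]
    omega

theorem three_mul_le_card (H : IsCubicNDB G γ) (T : IsPendantTriangle G u v w a b c) :
    3 * γ ≤ Fintype.card V := by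
  classical
  have hdisj : Disjoint (ndbW G u v) (ndbW G v w) := by
    simp only [Finset.disjoint_left, mem_ndbW]
    intro x _
    have := T.dist_bounds x
    omega
  have hdisj' : Disjoint (ndbW G u v ∪ ndbW G v w) (ndbW G w u) := by
    simp only [Finset.disjoint_left, mem_union, mem_ndbW]
    intro x _
    have := T.dist_bounds x
    omega
  have hle := card_le_univ ((ndbW G u v ∪ ndbW G v w) ∪ ndbW G w u)
  rw [card_union_of_disjoint hdisj', card_union_of_disjoint hdisj, H.card_ndbW T.left.adj₁,
    H.card_ndbW T.mid.adj₁, H.card_ndbW T.right.adj₁] at hle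
  omega

theorem eq_of_dist_eq (H : IsCubicNDB G γ) (T : IsPendantTriangle G u v w a b c)
    (hx : G.dist x u = G.dist x v) (hxw : G.dist x u ≤ G.dist x w)
    (hya : G.dist y a < G.dist y u) (hyv : G.dist y v ≤ G.dist y u) : y = x := by
  have := T.dist_add_one_eq H.connected (T.ne_of_dist_eq hx) hx.le hxw
  exact T.eq_of_lt_of_le H hya hyv (by omega) hx.ge

theorem dist_lt_of_adj (H : IsCubicNDB G γ) (T : IsPendantTriangle G u v w a b c)
    (hx : G.dist x u = G.dist x v) (hxw : G.dist x u < G.dist x w) (hxy : G.Adj x y) :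
    G.dist y w < G.dist x w := by
  by_contra! hyw
  have hw := T.dist_bounds x
  have hxa := T.dist_add_one_eq H.connected (T.ne_of_dist_eq hx) hx.le hxw.le
  have hxb := T.swap.dist_add_one_eq H.connected (T.swap.ne_of_dist_eq hx.symm) hx.ge (by omega)
  have hyu := dist_le_dist_add_one' hxy u
  have hyv := dist_le_dist_add_one' hxy v
  have hya := dist_le_dist_add_one' hxy a
  have hyb := dist_le_dist_add_one' hxy b
  have := T.dist_bounds y
  refine hxy.ne' ?_
  rcases lt_trichotomy (G.dist y u) (G.dist y v) with h | h | h
  · exact T.swap.eq_of_dist_eq H hx.symm (by omega) (by omega) h.le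
  · have hya' := T.dist_add_one_eq H.connected (T.ne_of_dist_eq h) h.le (by omega)
    exact T.eq_of_dist_eq H hx hxw.le (by omega) h.ge
  · exact T.eq_of_dist_eq H hx hxw.le (by omega) h.le

-- Otherwise every neighbour of `x` is closer to `w`, and the count at `x` bounds the number of
-- vertices by `3γ - 1`, while the triangle alone accounts for `3γ` of them.
theorem dist_right_eq (H : IsCubicNDB G γ) (T : IsPendantTriangle G u v w a b c)
    (hx : G.dist x u = G.dist x v) (hxw : G.dist x u ≤ G.dist x w) :
    G.dist x w = G.dist x u := by
  by_contra hne
  have hcloser : closerNeighbors G w x = G.neighborFinset x := by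
    refine filter_true_of_mem fun y hy => ?_
    rw [G.dist_comm, G.dist_comm (u := w)]
    exact T.dist_lt_of_adj H hx (by omega) ((mem_neighborFinset _ _ _).mp hy)
  have hwx : w ≠ x := by
    rintro rfl
    rw [SimpleGraph.dist_self] at hne hxw
    omega
  have hle := H.card_add_card_closerNeighbors_le hwx
  rw [hcloser, card_neighborFinset_eq_degree, H.regular] at hle
  have := T.three_mul_le_card H
  omega

theorem eq_of_adj_isNearest_of_dist_le (H : IsCubicNDB G γ)
    (T : IsPendantTriangle G u v w a b c) (hr : G.dist r u = G.dist r v)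
    (hrw : G.dist r u = G.dist r w) (hy : IsNearest G u v w y) (hyz : G.Adj y z)
    (hzv : z ≠ v) (hzw : z ≠ w) (hz : G.dist z v ≤ G.dist z u) : z = r := by
  obtain ⟨hyv, hyw⟩ := hy
  have hza : G.dist z a < G.dist z u := by
    by_cases hyu : y = u
    · subst hyu
      obtain rfl | rfl | rfl := (T.left.adj_iff z).mp hyz
      · exact absurd rfl hzv
      · exact absurd rfl hzw
      · rw [SimpleGraph.dist_self, dist_eq_one_iff_adj.mpr hyz.symm]
        exact one_pos
    · have hya := T.dist_add_one_eq H.connected hyu hyv.le hyw.le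
      have := dist_le_dist_add_one' hyz a
      have := dist_le_dist_add_one' hyz.symm v
      have := dist_le_dist_add_one' hyz.symm w
      by_cases hzu : G.dist z u ≤ G.dist y u
      · have hne : z ≠ u := T.ne_of_dist_eq (by omega)
        have := T.dist_add_one_eq H.connected hne (by omega) (by omega)
        omega
      · omega
  exact T.eq_of_dist_eq H hr hrw.le hza hz

theorem eq_of_adj_isNearest (H : IsCubicNDB G γ) (T : IsPendantTriangle G u v w a b c)
    (hr : G.dist r u = G.dist r v) (hrw : G.dist r u = G.dist r w) (hy : IsNearest G u v w y)
    (hyz : G.Adj y z) (hz : ¬IsNearest G u v w z) : z = v ∨ z = w ∨ z = r := by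
  by_contra! hne
  obtain ⟨hzv, hzw, hzr⟩ := hne
  rcases not_and_or.mp hz with h | h
  · exact hzr (T.eq_of_adj_isNearest_of_dist_le H hr hrw hy hyz hzv hzw (not_lt.mp h))
  · exact hzr (T.rotate.rotate.swap.eq_of_adj_isNearest_of_dist_le H hrw hr hy.symm hyz hzw hzv
      (not_lt.mp h))

theorem isNearest_of_adj (H : IsCubicNDB G γ) (T : IsPendantTriangle G u v w a b c)
    (hr : G.dist r u = G.dist r v) (hrw : G.dist r u = G.dist r w) (hrs : G.Adj r s)
    (hs : G.dist u s + 1 = G.dist u r) : IsNearest G u v w s := by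
  rw [G.dist_comm, G.dist_comm (u := u)] at hs
  have hv := dist_le_dist_add_one' hrs.symm v
  have hw := dist_le_dist_add_one' hrs.symm w
  have not_tie {p q e f : V} (T : IsPendantTriangle G u p q a e f) (hr : G.dist r u = G.dist r p)
      (hrq : G.dist r u ≤ G.dist r q) (hq : G.dist s u ≤ G.dist s q) :
      G.dist s u ≠ G.dist s p := fun hsp => by
    have := T.dist_add_one_eq H.connected (T.ne_of_dist_eq hsp) hsp.le hq
    exact hrs.ne (T.eq_of_dist_eq H hr hrq (by omega) hsp.ge).symm
  exact ⟨lt_of_le_of_ne (by omega) (not_tie T hr hrw.le (by omega)),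
    lt_of_le_of_ne (by omega) (not_tie T.rotate.rotate.swap hrw hr.le (by omega))⟩

-- The shortest paths from `s` to the region around `v` and `w` leave the region around `u` through
-- `v`, `w` or `r`, and the first two are too far from `s` to be of use.
theorem dist_lt_of_not_isNearest (H : IsCubicNDB G γ) (T : IsPendantTriangle G u v w a b c)
    (hr : G.dist r u = G.dist r v) (hrw : G.dist r u = G.dist r w) (hrs : G.Adj r s)
    (hs : G.dist u s + 1 = G.dist u r) (hzv : z ≠ v) (hzw : z ≠ w)
    (hz : ¬IsNearest G u v w z) : G.dist r z < G.dist s z := by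
  have hs' := T.isNearest_of_adj H hr hrw hrs hs
  induction hk : G.dist s z using Nat.strong_induction_on generalizing z with
  | _ k ih =>
    subst hk
    obtain ⟨y, hzy, hy⟩ := exists_adj_dist_add_one_eq H.connected (z := s) (x := z)
      (by rintro rfl; exact hz hs')
    have hry := dist_le_dist_add_one hzy.symm r
    have hcorner {p q e f g : V} (T : IsPendantTriangle G p u q e f g) (hyp : y = p)
        (hzu : z ≠ u) (hzq : z ≠ q) (hrp : G.dist r u = G.dist r p)
        (hrq : G.dist r u = G.dist r q) (hsp : G.dist s u < G.dist s p) :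
        G.dist r z < G.dist s z := by
      subst hyp
      obtain rfl | rfl | rfl := (T.left.adj_iff z).mp hzy.symm
      · exact absurd rfl hzu
      · exact absurd rfl hzq
      · have := T.dist_add_one_eq H.connected (T.ne_of_dist_eq hrp.symm) hrp.ge (by omega)
        rw [G.dist_comm, G.dist_comm (u := u)] at hs
        omega
    have hzu : z ≠ u := by
      rintro rfl
      refine hz ⟨?_, ?_⟩ <;> rw [SimpleGraph.dist_self]
      exacts [H.connected.pos_dist_of_ne hzv, H.connected.pos_dist_of_ne hzw]
    by_cases hyv : y = v
    · exact hcorner T.swap hyv hzu hzw hr hrw hs'.1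
    by_cases hyw : y = w
    · exact hcorner T.rotate.rotate hyw hzu hzv hrw hr hs'.2
    by_cases hyT : IsNearest G u v w y
    · obtain h | h | rfl := T.eq_of_adj_isNearest H hr hrw hyT hzy.symm hz
      · exact absurd h hzv
      · exact absurd h hzw
      · rw [SimpleGraph.dist_self]
        omega
    · have := ih _ (by omega) hyv hyw hyT rfl
      omega

theorem dist_right_ne (H : IsCubicNDB G γ) (hγ : 2 ≤ γ) (T : IsPendantTriangle G u v w a b c)
    (hr : G.dist r u = G.dist r v) : G.dist r u ≠ G.dist r w := fun hrw => by
  classical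
  obtain ⟨s, hrs, hs⟩ := exists_adj_dist_add_one_eq H.connected (T.ne_of_dist_eq hr).symm
  have hmem {p : V} (hp : G.Adj p u) : p ∈ ndbW G p u := by
    rw [mem_ndbW, SimpleGraph.dist_self]
    exact H.connected.pos_dist_of_ne hp.ne
  have hdisj : Disjoint ((ndbW G v u).erase v) ((ndbW G w u).erase w) := by
    simp only [Finset.disjoint_left, mem_erase, mem_ndbW, not_and, not_lt]
    intro z ⟨_, hz⟩ _
    by_contra! hz'
    have := T.dist_bounds z
    have := T.rotate.dist_right_eq H (x := z) (by omega) hz.le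
    omega
  have hr_notMem : r ∉ (ndbW G v u).erase v ∪ (ndbW G w u).erase w := by
    simp only [mem_union, mem_erase, mem_ndbW, hr]
    omega
  have hsub : insert r ((ndbW G v u).erase v ∪ (ndbW G w u).erase w) ⊆ ndbW G r s := by
    intro z hz
    rw [mem_ndbW, G.dist_comm, G.dist_comm (u := z)]
    simp only [mem_insert, mem_union, mem_erase, mem_ndbW] at hz
    obtain rfl | ⟨hzv, hz⟩ | ⟨hzw, hz⟩ := hz
    · rw [SimpleGraph.dist_self]
      exact H.connected.pos_dist_of_ne hrs.ne.symm
    · refine T.dist_lt_of_not_isNearest H hr hrw hrs hs hzv ?_ fun h => h.1.not_gt hz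
      rintro rfl
      rw [dist_eq_one_iff_adj.mpr T.right.adj₁, dist_eq_one_iff_adj.mpr T.right.adj₂] at hz
      exact lt_irrefl _ hz
    · refine T.dist_lt_of_not_isNearest H hr hrw hrs hs ?_ hzw fun h => h.2.not_gt hz
      rintro rfl
      rw [dist_eq_one_iff_adj.mpr T.mid.adj₁, dist_eq_one_iff_adj.mpr T.mid.adj₂] at hz
      exact lt_irrefl _ hz
  have hcard := card_le_card hsub
  rw [card_insert_of_notMem hr_notMem, card_union_of_disjoint hdisj,
    card_erase_of_mem (hmem T.left.adj₁.symm), card_erase_of_mem (hmem T.left.adj₂.symm),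
    H.card_ndbW T.left.adj₁.symm, H.card_ndbW T.left.adj₂.symm, H.card_ndbW hrs] at hcard
  omega

theorem isNearest_or (H : IsCubicNDB G γ) (hγ : 2 ≤ γ) (T : IsPendantTriangle G u v w a b c)
    (x : V) : IsNearest G u v w x ∨ IsNearest G v w u x ∨ IsNearest G w u v x := by
  have no_tie {p q r e f g : V} (T : IsPendantTriangle G p q r e f g)
      (hpq : G.dist x p = G.dist x q) : ¬G.dist x p ≤ G.dist x r := fun hle =>
    T.dist_right_ne H hγ hpq (T.dist_right_eq H hpq hle).symm
  have := no_tie T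
  have := no_tie T.rotate
  have := no_tie T.rotate.rotate
  simp only [IsNearest]
  omega

theorem exists_not_isNearest (H : IsCubicNDB G γ) (T : IsPendantTriangle G u v w a b c) :
    ∃ x, G.dist x a < G.dist x u ∧ ¬IsNearest G u v w x := by
  obtain ⟨x, hxa, hxv⟩ := T.exists_lt_and_le H
  exact ⟨x, hxa, fun h => h.1.not_ge hxv⟩

theorem eq_of_not_isNearest (H : IsCubicNDB G γ) (hγ : 2 ≤ γ)
    (T : IsPendantTriangle G u v w a b c)
    (hxa : G.dist x a < G.dist x u) (hx : ¬IsNearest G u v w x)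
    (hya : G.dist y a < G.dist y u) (hy : ¬IsNearest G u v w y) : x = y := by
  have le_of_not {z : V} (hz : ¬IsNearest G u v w z) : G.dist z v ≤ G.dist z u := by
    have := T.dist_bounds z
    have := T.isNearest_or H hγ z
    simp only [IsNearest] at *
    omega
  exact T.eq_of_lt_of_le H hxa (le_of_not hx) hya (le_of_not hy)

theorem isNearest_right_of_isNearest (H : IsCubicNDB G γ) (hγ : 2 ≤ γ)
    (T : IsPendantTriangle G u v w a b c)
    (hxa : G.dist x a < G.dist x u) (hx : ¬IsNearest G u v w x)
    (hyc : G.dist y c < G.dist y w) (hy : IsNearest G u v w y) : IsNearest G w u v x := by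
  have hyu : y ≠ u := by
    rintro rfl
    have := H.connected.pos_dist_of_ne T.right.ne₁₃
    rw [dist_eq_one_iff_adj.mpr T.left.adj₂] at hyc
    omega
  have hyc' : y ≠ c := by
    rintro rfl
    have := H.connected.pos_dist_of_ne T.right.ne₁₃.symm
    have := hy.2
    rw [dist_eq_one_iff_adj.mpr T.right.adj₃.symm] at this
    omega
  obtain ⟨z, hyz, hz⟩ := exists_adj_dist_add_one_eq H.connected hyc'.symm
  rw [G.dist_comm, G.dist_comm (u := c)] at hz
  have hya := T.dist_add_one_eq H.connected hyu hy.1.le hy.2.le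
  have hza := dist_le_dist_add_one' hyz a
  have hzw := dist_le_dist_add_one' hyz w
  have hwz := dist_le_dist_add_one' hyz.symm w
  have := T.dist_bounds y
  have hzT : IsNearest G w u v z := by
    by_contra hzT
    refine hyz.ne (T.rotate.rotate.eq_of_not_isNearest H hγ hyc ?_ (by omega) hzT)
    exact fun h => h.1.not_gt hy.2
  have := hzT.1
  have := hy.2
  have hxz : x = z :=
    T.eq_of_not_isNearest H hγ hxa hx (by omega) fun h => h.2.not_gt hzT.1
  exact hxz ▸ hzT

theorem isNearest_right_iff (H : IsCubicNDB G γ) (hγ : 2 ≤ γ)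
    (T : IsPendantTriangle G u v w a b c)
    (hxa : G.dist x a < G.dist x u) (hx : ¬IsNearest G u v w x)
    (hyc : G.dist y c < G.dist y w) (hy : ¬IsNearest G w u v y) :
    IsNearest G u v w y ↔ IsNearest G w u v x where
  mp h := T.isNearest_right_of_isNearest H hγ hxa hx hyc h
  mpr h := (T.rotate.swap.isNearest_right_of_isNearest H hγ hyc (fun h => hy h.symm) hxa
    h.symm).symm

end IsPendantTriangle

theorem IsCubicNDB.cliqueFree_three {V : Type*} [Fintype V] {G : SimpleGraph V}
    [DecidableRel G.Adj] {γ : ℕ} (H : IsCubicNDB G γ) (hγ : 2 ≤ γ) : G.CliqueFree 3 := by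
  classical
  intro s hs
  obtain ⟨u, v, w, huv, huw, hvw, -⟩ := is3Clique_iff.mp hs
  obtain ⟨a, ha⟩ := exists_isNeighborTriple_of_adj_of_adj (H.regular u) huv huw hvw.ne
  obtain ⟨b, hb⟩ := exists_isNeighborTriple_of_adj_of_adj (H.regular v) hvw huv.symm huw.ne.symm
  obtain ⟨c, hc⟩ := exists_isNeighborTriple_of_adj_of_adj (H.regular w) huw.symm hvw.symm huv.ne
  have T : IsPendantTriangle G u v w a b c := ⟨ha, hb, hc⟩
  have T' := T.rotate
  have T'' := T.rotate.rotate
  obtain ⟨x, hxa, hx⟩ := T.exists_not_isNearest H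
  obtain ⟨y, hyb, hy⟩ := T'.exists_not_isNearest H
  obtain ⟨z, hzc, hz⟩ := T''.exists_not_isNearest H
  -- Sending each corner to the corner nearest to its exceptional vertex would be an involution
  -- without fixed points on the three corners.
  have hzx := T.isNearest_right_iff H hγ hxa hx hzc hz
  have hxy := T'.isNearest_right_iff H hγ hyb hy hxa hx
  have hyz := T''.isNearest_right_iff H hγ hzc hz hyb hy
  have := T.isNearest_or H hγ x
  have := T.isNearest_or H hγ y
  have := T.isNearest_or H hγ z
  simp only [IsNearest] at *
  omega

/-- The vertices `p 0, p 1, …, p d` form a geodesic; the values of `p` beyond `d` are irrelevant. -/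
def IsGeodesic {V : Type*} (G : SimpleGraph V) (p : ℕ → V) (d : ℕ) : Prop :=
  ∀ i j, i ≤ j → j ≤ d → G.dist (p i) (p j) + i = j

namespace IsGeodesic

section Basic

variable {V : Type*} {G : SimpleGraph V} {p : ℕ → V} {d i j : ℕ} {x : V}

theorem of_adj (hadj : ∀ i < d, G.Adj (p i) (p (i + 1))) (hd : d ≤ G.dist (p 0) (p d)) :
    IsGeodesic G p d := by
  have hdiff (x : V) (i j : ℕ) (hij : i ≤ j) (hj : j ≤ d) :
      G.dist x (p j) + i ≤ G.dist x (p i) + j ∧ G.dist x (p i) + i ≤ G.dist x (p j) + j := by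
    induction j, hij using Nat.le_induction with
    | base => exact ⟨le_rfl, le_rfl⟩
    | succ j _ ih =>
      have := ih (by omega)
      have := dist_le_dist_add_one (hadj j (by omega)) x
      have := dist_le_dist_add_one (hadj j (by omega)).symm x
      omega
  intro i j hij hj
  have hij' := hdiff (p i) i j hij hj
  have h0i := hdiff (p j) 0 i i.zero_le (by omega)
  have hjd := hdiff (p 0) j d hj le_rfl
  rw [SimpleGraph.dist_self] at hij'
  rw [G.dist_comm (u := p j), G.dist_comm (u := p j)] at h0i
  omega

theorem exists_of_connected (hG : G.Connected) (u v : V) :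
    ∃ p, IsGeodesic G p (G.dist u v) ∧ p 0 = u ∧ p (G.dist u v) = v := by
  obtain ⟨q, hq⟩ := hG.exists_walk_length_eq_dist u v
  have h0 : q.getVert 0 = u := q.getVert_zero
  have hd : q.getVert (G.dist u v) = v := hq ▸ q.getVert_length
  refine ⟨q.getVert, of_adj (fun i hi => q.adj_getVert_succ (by omega)) ?_, h0, hd⟩
  rw [h0, hd]

theorem reverse (hp : IsGeodesic G p d) : IsGeodesic G (fun i => p (d - i)) d := by
  intro i j hij hj
  have := hp (d - j) (d - i) (by omega) (by omega)
  rw [G.dist_comm] at this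
  change G.dist (p (d - i)) (p (d - j)) + i = j
  omega

theorem adj (hp : IsGeodesic G p d) (hi : i < d) : G.Adj (p i) (p (i + 1)) := by
  have := hp i (i + 1) (by omega) hi
  exact dist_eq_one_iff_adj.mp (by omega)

theorem dist_zero (hp : IsGeodesic G p d) (hi : i ≤ d) : G.dist (p i) (p 0) = i := by
  rw [G.dist_comm]
  exact hp 0 i i.zero_le hi

theorem ne (hp : IsGeodesic G p d) (hij : i < j) (hj : j ≤ d) : p i ≠ p j := fun h => by
  have := hp i j hij.le hj
  rw [h, SimpleGraph.dist_self] at this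
  omega

end Basic

section NDB

variable {V : Type*} [Fintype V] {G : SimpleGraph V} [DecidableRel G.Adj]
variable {p : ℕ → V} {d i γ : ℕ} {x : V}

theorem mem_or_exists_of_mem_ndbW (H : IsCubicNDB G γ) (hp : IsGeodesic G p d) (hi : i < d)
    {T : Finset V} (hT : T ⊆ ndbW G (p (i + 1)) (p i)) (hpT : ∀ j, i < j → j ≤ d → p j ∉ T)
    (hcard : γ + i ≤ #T + d) (hx : x ∈ ndbW G (p (i + 1)) (p i)) :
    x ∈ T ∨ ∃ j, i < j ∧ j ≤ d ∧ x = p j := by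
  classical
  have hinj : Set.InjOn p (Ioc i d) := by
    intro j hj k hk hjk
    rw [mem_coe, mem_Ioc] at hj hk
    by_contra hne
    rcases lt_or_gt_of_ne hne with h | h
    exacts [hp.ne h hk.2 hjk, hp.ne h hj.2 hjk.symm]
  have hdisj : Disjoint T ((Ioc i d).image p) := by
    simp only [Finset.disjoint_right, mem_image, mem_Ioc]
    rintro _ ⟨j, ⟨hij, hj⟩, rfl⟩
    exact hpT j hij hj
  have hsub : T ∪ (Ioc i d).image p ⊆ ndbW G (p (i + 1)) (p i) := by
    refine union_subset hT (image_subset_iff.mpr fun j hj => ?_)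
    rw [mem_Ioc] at hj
    have := hp i j hj.1.le hj.2
    have := hp (i + 1) j hj.1 hj.2
    rw [mem_ndbW, G.dist_comm, G.dist_comm (v := p i)]
    omega
  have heq := eq_of_subset_of_card_le hsub (by
    rw [card_union_of_disjoint hdisj, card_image_of_injOn hinj, Nat.card_Ioc,
      H.card_ndbW (hp.adj hi).symm]
    omega)
  rw [← heq, mem_union, mem_image] at hx
  obtain hx | ⟨j, hj, rfl⟩ := hx
  · exact .inl hx
  · exact .inr ⟨j, (mem_Ioc.mp hj).1, (mem_Ioc.mp hj).2, rfl⟩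

theorem exists_isNeighborTriple (hreg : G.IsRegularOfDegree 3) (hp : IsGeodesic G p d)
    (hi : i + 2 ≤ d) : ∃ x, IsNeighborTriple G (p (i + 1)) (p i) (p (i + 2)) x :=
  exists_isNeighborTriple_of_adj_of_adj (hreg _) (hp.adj (by omega)).symm
    (hp.adj (by omega)) (hp.ne (by omega) hi)

theorem eq_of_three_le_dist (H : IsCubicNDB G (d + 1)) (hp : IsGeodesic G p d) (hd : 2 ≤ d)
    (hx : G.dist x (p 1) < G.dist x (p 0)) (hx3 : 3 ≤ G.dist x (p 0)) :
    x = p (G.dist x (p 0)) := by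
  obtain ⟨w, hw : IsNeighborTriple G (p 1) (p 0) (p 2) w⟩ := hp.exists_isNeighborTriple H.regular hd
  have hwadj := dist_eq_one_iff_adj.mpr hw.adj₃
  have hw0 := dist_eq_two_of_adj_of_adj (H.cliqueFree_three (by omega)) hw.adj₁.symm hw.adj₃
    hw.ne₁₃
  rw [G.dist_comm] at hwadj hw0
  have hT : {w} ⊆ ndbW G (p 1) (p 0) := by
    rw [singleton_subset_iff, mem_ndbW]
    omega
  have hpT (j : ℕ) (_ : 0 < j) (hj : j ≤ d) : p j ∉ ({w} : Finset V) := by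
    rw [mem_singleton]
    intro hjw
    rw [← hjw, hp.dist_zero hj] at hw0
    exact hw.ne₂₃ (by rw [← hjw, hw0])
  obtain hxw | ⟨j, -, hj, rfl⟩ := hp.mem_or_exists_of_mem_ndbW H (by omega) hT hpT
    (by rw [card_singleton]; omega) (mem_ndbW.mpr hx)
  · rw [mem_singleton.mp hxw] at hx3
    omega
  · rw [hp.dist_zero hj]

theorem dist_zero_le_of_adj (H : IsCubicNDB G (d + 1)) (hp : IsGeodesic G p d) (hi : 2 ≤ i)
    (hid : i < d) (hx : G.Adj (p i) x) (hne : x ≠ p (i + 1)) : G.dist x (p 0) ≤ i := by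
  by_contra! hlt
  have h0 := dist_le_dist_add_one' hx (p 0)
  have h1 := dist_le_dist_add_one' hx (p 1)
  have h1i := hp 1 i (by omega) (by omega)
  rw [G.dist_comm] at h1i
  rw [hp.dist_zero (by omega)] at h0
  have heq := hp.eq_of_three_le_dist H (by omega) (x := x) (by omega) (by omega)
  rw [show G.dist x (p 0) = i + 1 by omega] at heq
  exact hne heq

theorem dist_of_adj_of_ne (H : IsCubicNDB G (d + 1)) (hp : IsGeodesic G p d) (hi : 1 ≤ i)
    (hid : i + 3 ≤ d) (hx : G.Adj (p (i + 1)) x) (hne : x ≠ p i) (hne' : x ≠ p (i + 2)) :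
    G.dist x (p 0) = i + 1 ∧ G.dist x (p d) + (i + 1) = d := by
  have h0 := hp.dist_zero_le_of_adj H (by omega) (by omega) hx hne'
  have hd := hp.reverse.dist_zero_le_of_adj H (i := d - (i + 1)) (by omega) (by omega)
    (x := x) (by rwa [show d - (d - (i + 1)) = i + 1 by omega])
    (by rwa [show d - (d - (i + 1) + 1) = i by omega])
  have htri : G.dist (p 0) (p d) ≤ G.dist (p 0) x + G.dist x (p d) := H.connected.dist_triangle
  rw [G.dist_comm, hp.dist_zero le_rfl, G.dist_comm (v := x)] at htri
  rw [Nat.sub_zero] at hd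
  omega

end NDB

end IsGeodesic

/-- For a geodesic `p 0, …, p d`, the vertex `y` is a neighbour of `p 2` off the geodesic and `z` is
a neighbour of `y` as close to `p d` as `p 3` is: the geodesic forks at `p 2`. -/
structure IsFork {V : Type*} (G : SimpleGraph V) (p : ℕ → V) (d : ℕ) (y z : V) : Prop where
  adj : G.Adj (p 2) y
  ne_one : y ≠ p 1
  ne_three : y ≠ p 3
  adj_tip : G.Adj y z
  dist_tip : G.dist z (p d) + 3 = d

namespace IsFork

variable {V : Type*} [Fintype V] {G : SimpleGraph V} [DecidableRel G.Adj]
variable {p : ℕ → V} {d : ℕ} {x y z : V}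

theorem exists_of_isGeodesic (H : IsCubicNDB G (d + 1)) (hp : IsGeodesic G p d) (hd : 4 ≤ d) :
    ∃ y z, IsFork G p d y z := by
  obtain ⟨y, hy : IsNeighborTriple G (p 2) (p 1) (p 3) y⟩ :=
    hp.exists_isNeighborTriple H.regular (i := 1) (by omega)
  have hyd := hp.dist_of_adj_of_ne H le_rfl hd hy.adj₃ hy.ne₁₃.symm hy.ne₂₃.symm
  obtain ⟨z, hyz, hz⟩ := exists_adj_dist_add_one_eq H.connected (x := y) (z := p d) (by
    rintro rfl
    rw [SimpleGraph.dist_self] at hyd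
    omega)
  refine ⟨y, z, hy.adj₃, hy.ne₁₃.symm, hy.ne₂₃.symm, hyz, ?_⟩
  rw [G.dist_comm, G.dist_comm (v := y)] at hz
  omega

theorem dist_eq (F : IsFork G p d y z) (H : IsCubicNDB G (d + 1)) (hp : IsGeodesic G p d)
    (hd : 4 ≤ d) : G.dist y (p 0) = 2 ∧ G.dist z (p 0) = 3 := by
  have hy := hp.dist_of_adj_of_ne H le_rfl hd F.adj F.ne_one F.ne_three
  have hz := dist_le_dist_add_one' F.adj_tip (p 0)
  have htri : G.dist (p 0) (p d) ≤ G.dist (p 0) z + G.dist z (p d) := H.connected.dist_triangle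
  rw [G.dist_comm, hp.dist_zero le_rfl, G.dist_comm (v := z)] at htri
  have := F.dist_tip
  omega

theorem eq_or_of_dist_lt (F : IsFork G p d y z) (H : IsCubicNDB G (d + 1))
    (hp : IsGeodesic G p d) (hd : 4 ≤ d) (hx : G.dist x (p 2) < G.dist x (p 1)) :
    x = y ∨ x = z ∨ ∃ j, 1 < j ∧ j ≤ d ∧ x = p j := by
  classical
  have hG := H.cliqueFree_three (by omega)
  obtain ⟨hy0, hz0⟩ := F.dist_eq H hp hd
  have hz3 : z ≠ p 3 := by
    rintro rfl
    exact not_adj_of_adj_of_adj hG (hp.adj (by omega)) F.adj F.adj_tip.symm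
  have hy2 := dist_eq_one_iff_adj.mpr F.adj.symm
  have hz2 := dist_eq_two_of_adj_of_adj hG F.adj F.adj_tip
    (by rintro rfl; rw [hp.dist_zero (by omega)] at hz0; omega)
  have hy1 := dist_eq_two_of_adj_of_adj hG (hp.adj (i := 1) (by omega)) F.adj F.ne_one.symm
  have hz1 : ¬G.dist z (p 1) < 3 := fun h => by
    have := hp.eq_of_three_le_dist H (by omega) (x := z) (by omega) hz0.ge
    exact hz3 (hz0 ▸ this)
  rw [G.dist_comm] at hz2 hy1
  have hpT (j : ℕ) (_ : 1 < j) (hj : j ≤ d) : p j ∉ ({y, z} : Finset V) := by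
    rw [mem_insert, mem_singleton]
    rintro (rfl | rfl)
    · rw [hp.dist_zero hj] at hy0
      exact F.adj.ne (hy0 ▸ rfl)
    · rw [hp.dist_zero hj] at hz0
      exact hz3 (hz0 ▸ rfl)
  have hT : ({y, z} : Finset V) ⊆ ndbW G (p 2) (p 1) := by
    rw [insert_subset_iff, singleton_subset_iff, mem_ndbW, mem_ndbW]
    omega
  have := hp.mem_or_exists_of_mem_ndbW H (by omega) hT hpT
    (by rw [card_pair F.adj_tip.ne]; omega) (mem_ndbW.mpr hx)
  rwa [mem_insert, mem_singleton, or_assoc] at this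

theorem eq_of_dist_lt (F : IsFork G p d y z) (H : IsCubicNDB G (d + 1)) (hp : IsGeodesic G p d)
    (hd : 4 ≤ d) (hx3 : 3 ≤ G.dist x (p 0)) (hxz : x ≠ z)
    (hx2 : G.dist x (p 2) < G.dist x (p 0)) : x = p (G.dist x (p 0)) := by
  by_cases hx1 : G.dist x (p 1) < G.dist x (p 0)
  · exact hp.eq_of_three_le_dist H (by omega) hx1 hx3
  · obtain rfl | h | ⟨j, -, hj, rfl⟩ := F.eq_or_of_dist_lt H hp hd (x := x) (by omega)
    · have := F.dist_eq H hp hd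
      omega
    · exact absurd h hxz
    · rw [hp.dist_zero hj]

theorem le_four (F : IsFork G p d y z) (H : IsCubicNDB G (d + 1)) (hp : IsGeodesic G p d) :
    d ≤ 4 := by
  by_contra! hd
  have hG := H.cliqueFree_three (by omega)
  obtain ⟨x, hx : IsNeighborTriple G (p 3) (p 2) (p 4) x⟩ :=
    hp.exists_isNeighborTriple H.regular (i := 2) (by omega)
  have hx0 : G.dist x (p 0) = 3 :=
    (hp.dist_of_adj_of_ne H one_le_two hd hx.adj₃ hx.ne₁₃.symm hx.ne₂₃.symm).1
  have hx2 := dist_eq_two_of_adj_of_adj hG hx.adj₁.symm hx.adj₃ hx.ne₁₃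
  have hxz : x = z := by
    by_contra hxz
    rw [G.dist_comm] at hx2
    have hx3 : x = p 3 :=
      hx0 ▸ F.eq_of_dist_lt H hp (by omega) (by omega) hxz (by omega)
    exact hx.adj₃.ne hx3.symm
  subst hxz
  obtain ⟨q, hxq, hq⟩ := exists_adj_dist_add_one_eq H.connected (x := x) (z := p d) (by
    rintro rfl
    rw [hp.dist_zero le_rfl] at hx0
    omega)
  have hqx := F.dist_tip
  rw [G.dist_comm, G.dist_comm (v := x)] at hq
  have hq0 := dist_le_dist_add_one' hxq (p 0)
  have hq2 := dist_le_dist_add_one' hxq (p 2)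
  have htri : G.dist (p 0) (p d) ≤ G.dist (p 0) q + G.dist q (p d) := H.connected.dist_triangle
  rw [G.dist_comm, hp.dist_zero le_rfl, G.dist_comm (v := q)] at htri
  rw [G.dist_comm] at hx2
  have hq4 : G.dist q (p 0) = 4 := by omega
  have hqp : q = p 4 :=
    hq4 ▸ F.eq_of_dist_lt H hp (by omega) (by omega) hxq.ne' (by omega)
  exact not_adj_of_adj_of_adj hG hx.adj₃ hx.adj₂ (hqp ▸ hxq)

theorem dist_one_le_two (F : IsFork G p 4 y z) (H : IsCubicNDB G 5) (hp : IsGeodesic G p 4)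
    (hx : IsNeighborTriple G (p 3) (p 2) (p 4) x) : G.dist x (p 1) ≤ 2 := by
  have hG := H.cliqueFree_three (by omega)
  have hx2 := dist_eq_two_of_adj_of_adj hG hx.adj₁.symm hx.adj₃ hx.ne₁₃
  rw [G.dist_comm] at hx2
  by_contra! hx1
  obtain rfl | rfl | ⟨j, hj, hj', rfl⟩ := F.eq_or_of_dist_lt H hp le_rfl (x := x) (by omega)
  · exact not_adj_of_adj_of_adj hG F.adj hx.adj₁.symm hx.adj₃.symm
  · have hxp := dist_eq_one_iff_adj.mp (by have := F.dist_tip; omega : G.dist x (p 4) = 1)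
    exact not_adj_of_adj_of_adj hG hx.adj₃ hx.adj₂ hxp
  · obtain rfl | rfl | rfl : j = 2 ∨ j = 3 ∨ j = 4 := by omega
    exacts [hx.ne₁₃ rfl, hx.adj₃.ne rfl, hx.ne₂₃ rfl]

end IsFork

namespace IsGeodesic

variable {V : Type*} [Fintype V] {G : SimpleGraph V} [DecidableRel G.Adj]
variable {p : ℕ → V} {w x : V}

theorem adj_three_of_dist_four_le (H : IsCubicNDB G 5) (hp : IsGeodesic G p 4)
    (hw : IsNeighborTriple G (p 1) (p 0) (p 2) w) (hw4 : G.dist w (p 4) ≤ 2) :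
    G.Adj w (p 3) := by
  have hw0 := dist_eq_two_of_adj_of_adj (H.cliqueFree_three (by omega)) hw.adj₁.symm hw.adj₃
    hw.ne₁₃
  have htri : G.dist (p 0) (p 4) ≤ G.dist (p 0) w + G.dist w (p 4) := H.connected.dist_triangle
  rw [G.dist_comm, hp.dist_zero le_rfl] at htri
  obtain ⟨q, hwq, hq⟩ := exists_adj_dist_add_one_eq H.connected (x := w) (z := p 4) (by
    rintro rfl
    rw [SimpleGraph.dist_self] at htri
    omega)
  rw [G.dist_comm, G.dist_comm (v := w)] at hq
  have hqp := dist_eq_one_iff_adj.mp (by omega : G.dist q (p 4) = 1)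
  have hq0 := dist_le_dist_add_one' hwq (p 0)
  have hq0' := dist_le_dist_add_one' hqp (p 0)
  have hq1 := dist_le_dist_add_one' hwq (p 1)
  rw [dist_eq_one_iff_adj.mpr hw.adj₃.symm] at hq1
  rw [G.dist_comm] at hw0
  rw [hp.dist_zero le_rfl] at hq0'
  have hq3 := hp.eq_of_three_le_dist H (by omega) (x := q) (by omega) (by omega)
  rw [show G.dist q (p 0) = 3 by omega] at hq3
  exact hq3 ▸ hwq

theorem adj_three (H : IsCubicNDB G 5) (hp : IsGeodesic G p 4)
    (hw : IsNeighborTriple G (p 1) (p 0) (p 2) w) : G.Adj w (p 3) := by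
  have hG := H.cliqueFree_three (by omega)
  obtain ⟨y, z, F⟩ := IsFork.exists_of_isGeodesic H hp le_rfl
  obtain ⟨x, hx : IsNeighborTriple G (p 3) (p 2) (p 4) x⟩ :=
    hp.exists_isNeighborTriple H.regular le_rfl
  have hx2 := dist_eq_two_of_adj_of_adj hG hx.adj₁.symm hx.adj₃ hx.ne₁₃
  have hx0 := dist_le_dist_add_one' hx.adj₃.symm (p 0)
  have hx0' := hp.dist_zero (i := 3) (by omega)
  have h13 := hp 1 3 (by omega) (by omega)
  obtain rfl | ⟨q, hq, hxq⟩ := eq_or_exists_adj_of_dist_le_add_one H.connected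
    (F.dist_one_le_two H hp hx)
  · have := dist_eq_one_iff_adj.mpr hx.adj₃.symm
    omega
  obtain rfl | rfl | rfl := (hw.adj_iff q).mp hq
  · omega
  · rw [G.dist_comm] at hx2
    omega
  by_cases hxq' : x = q
  · exact hxq' ▸ hx.adj₃.symm
  have hqx : G.Adj q x := by
    have := H.connected.pos_dist_of_ne hxq'
    exact (dist_eq_one_iff_adj.mp (by omega)).symm
  refine hp.adj_three_of_dist_four_le H hw ?_
  by_contra! hq4
  have hq3 := dist_le_dist_add_one' hqx.symm (p 3)
  rw [dist_eq_one_iff_adj.mpr hx.adj₃.symm] at hq3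
  have heq : q = p (4 - G.dist q (p 4)) :=
    hp.reverse.eq_of_three_le_dist H (by omega) (x := q) (hq3.trans_lt hq4) hq4
  have : 4 - G.dist q (p 4) = 0 ∨ 4 - G.dist q (p 4) = 1 := by omega
  obtain h | h := this <;> rw [h] at heq
  exacts [hw.ne₁₃ heq.symm, hw.adj₃.ne heq.symm]

end IsGeodesic

theorem exists_isGeodesic_four {V : Type*} {G : SimpleGraph V} {a b c e f : V}
    (hab : G.Adj a b) (hbc : G.Adj b c) (hce : G.Adj c e) (hef : G.Adj e f)
    (h : G.dist a f = 4) :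
    ∃ p, IsGeodesic G p 4 ∧ p 0 = a ∧ p 1 = b ∧ p 2 = c ∧ p 3 = e ∧ p 4 = f := by
  refine ⟨fun | 0 => a | 1 => b | 2 => c | 3 => e | _ => f, .of_adj (fun i hi => ?_) h.ge,
    rfl, rfl, rfl, rfl, rfl⟩
  interval_cases i
  exacts [hab, hbc, hce, hef]

theorem exists_adj_of_dist_eq_four {V : Type*} [Fintype V] {G : SimpleGraph V}
    [DecidableRel G.Adj] {o a b e f : V} (H : IsCubicNDB G 5) (hoa : G.Adj o a)
    (hab : G.Adj a b) (hbe : G.Adj b e) (hef : G.Adj e f) (hof : G.dist o f = 4) :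
    ∃ w, IsNeighborTriple G a o b w ∧ G.Adj w e ∧ G.dist w o = 2 := by
  obtain ⟨p, hp, rfl, rfl, rfl, rfl, rfl⟩ := exists_isGeodesic_four hoa hab hbe hef hof
  obtain ⟨w, hw : IsNeighborTriple G (p 1) (p 0) (p 2) w⟩ :=
    hp.exists_isNeighborTriple H.regular (i := 0) (by omega)
  refine ⟨w, hw, hp.adj_three H hw, ?_⟩
  rw [G.dist_comm]
  exact dist_eq_two_of_adj_of_adj (H.cliqueFree_three (by omega)) hoa hw.adj₃ hw.ne₁₃

theorem dist_eq_two_of_dist_eq_four {V : Type*} [Fintype V] {G : SimpleGraph V}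
    [DecidableRel G.Adj] {o a b e f x : V} (H : IsCubicNDB G 5) (hoa : G.Adj o a)
    (hab : G.Adj a b) (hbe : G.Adj b e) (hef : G.Adj e f) (hof : G.dist o f = 4)
    (hx : G.Adj b x) (hxa : x ≠ a) (hxe : x ≠ e) : G.dist x o = 2 := by
  obtain ⟨p, hp, rfl, rfl, rfl, rfl, rfl⟩ := exists_isGeodesic_four hoa hab hbe hef hof
  exact (hp.dist_of_adj_of_ne H le_rfl le_rfl hx hxa hxe).1

/-- The neighbourhood that a geodesic `o a b e f` has in a cubic nicely distance-balanced graph with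
`γ = 5`: the vertices `w`, `y`, `r` and `s` are the third neighbours of `a`, `b`, `v` and `w`, and
`o v y z f` is a second geodesic. -/
structure IsFourGeodesicNhd {V : Type*} (G : SimpleGraph V) (o a b e f v w y z r s : V) :
    Prop where
  triple_a : IsNeighborTriple G a o b w
  triple_b : IsNeighborTriple G b a e y
  triple_e : IsNeighborTriple G e b f w
  triple_y : IsNeighborTriple G y v b z
  triple_v : IsNeighborTriple G v o y r
  triple_z : IsNeighborTriple G z y f r
  triple_w : IsNeighborTriple G w a e s
  dist_b : G.dist b o = 2
  dist_w : G.dist w o = 2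
  dist_y : G.dist y o = 2
  dist_s : G.dist s o = 2
  dist_e : G.dist e o = 3
  dist_z : G.dist z o = 3
  dist_f : G.dist f o = 4
  dist_of_adj : ∀ x, G.Adj r x → x ≠ v → x ≠ z → G.dist x o = 2

theorem IsFourGeodesicNhd.exists_of_isGeodesic {V : Type*} [Fintype V] {G : SimpleGraph V}
    [DecidableRel G.Adj] {p : ℕ → V} (H : IsCubicNDB G 5) (hp : IsGeodesic G p 4) :
    ∃ v w y z r s, IsFourGeodesicNhd G (p 0) (p 1) (p 2) (p 3) (p 4) v w y z r s := by
  obtain ⟨y, z, F⟩ := IsFork.exists_of_isGeodesic H hp le_rfl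
  obtain ⟨hy0, hz0⟩ := F.dist_eq H hp le_rfl
  have hz4 : G.Adj z (p 4) := dist_eq_one_iff_adj.mp (by have := F.dist_tip; omega)
  have h04 := hp 0 4 (by omega) le_rfl
  have hp01 : G.Adj (p 0) (p 1) := hp.adj (by omega)
  have hp12 : G.Adj (p 1) (p 2) := hp.adj (by omega)
  have hp23 : G.Adj (p 2) (p 3) := hp.adj (by omega)
  have hp34 : G.Adj (p 3) (p 4) := hp.adj (by omega)
  have dist_zero (i : ℕ) (hi : i ≤ 4) : G.dist (p i) (p 0) = i := hp.dist_zero hi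
  have h1 := dist_zero 1
  have h2 := dist_zero 2
  have h3 := dist_zero 3
  have h4 := dist_zero 4
  have h0 : G.dist (p 0) (p 0) = 0 := SimpleGraph.dist_self
  obtain ⟨w, hw, hwe, hw0⟩ := exists_adj_of_dist_eq_four H hp01 hp12 hp23 hp34 h04
  obtain ⟨v, hyv, hvo⟩ := exists_adj_adj_of_dist_eq_two H.connected hy0
  obtain ⟨r, hr, hrz, hr0⟩ := exists_adj_of_dist_eq_four H hvo.symm hyv.symm F.adj_tip hz4 h04
  obtain ⟨s, hs⟩ := exists_isNeighborTriple_of_adj_of_adj (H.regular w) hw.adj₃.symm hwe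
    (by grind)
  have hs0 := dist_eq_two_of_dist_eq_four H hp01 hw.adj₃ hwe hp34 h04 hs.adj₃
    hs.ne₁₃.symm hs.ne₂₃.symm
  refine ⟨v, w, y, z, r, s, hw, ?_, ?_, ?_, hr, ?_, hs, h2 (by omega), hw0, hy0, hs0,
    h3 (by omega), hz0, h4 (by omega), fun x hx hxv hxz =>
      dist_eq_two_of_dist_eq_four H hvo.symm hr.adj₃ hrz hz4 h04 hx hxv hxz⟩ <;>
    refine isNeighborTriple_of_adj (H.regular _) ?_ ?_ ?_ ?_ ?_ ?_ <;>
    grind [IsNeighborTriple, IsFork, G.adj_comm]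

namespace IsFourGeodesicNhd

variable {V : Type*} {G : SimpleGraph V} {o a b e f v w y z r s t x : V}

theorem two_lt_dist_of_adj (N : IsFourGeodesicNhd G o a b e f v w y z r s) (hG : G.Connected)
    (hot : G.Adj o t) (hta : t ≠ a) (htv : t ≠ v) : 2 < G.dist t b := by
  have ht := dist_eq_one_iff_adj.mpr hot.symm
  by_contra! hle
  obtain rfl | ⟨q, hq, htq⟩ := eq_or_exists_adj_of_dist_le_add_one hG hle
  · exact absurd N.dist_b (by omega)
  · have := eq_or_adj_of_dist_le_one hG htq
    cases N
    grind [IsNeighborTriple]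

theorem two_lt_dist (N : IsFourGeodesicNhd G o a b e f v w y z r s) (hG : G.Connected)
    (hG3 : G.CliqueFree 3) : 2 < G.dist s b := by
  have hwb := not_adj_of_adj_of_adj hG3 N.triple_a.adj₃ N.triple_a.adj₂
  have ho := SimpleGraph.dist_self (G := G) (v := o)
  have hv := dist_eq_one_iff_adj.mpr N.triple_v.adj₁
  by_contra! hle
  obtain rfl | ⟨q, hq, hsq⟩ := eq_or_exists_adj_of_dist_le_add_one hG hle
  · exact hwb N.triple_w.adj₃
  · have := eq_or_adj_of_dist_le_one hG hsq
    have := N.triple_w.adj₃.ne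
    have := N.triple_w.adj₃
    cases N
    grind [IsNeighborTriple, G.adj_comm]

theorem three_lt_dist_of_adj_of_adj (N : IsFourGeodesicNhd G o a b e f v w y z r s)
    (hG : G.Connected) (hG3 : G.CliqueFree 3) (hot : G.Adj o t) (hta : t ≠ a) (htv : t ≠ v)
    (htx : G.Adj t x) (hxo : x ≠ o) (hxs : x ≠ s) : 3 < G.dist x b := by
  have hx := dist_eq_two_of_adj_of_adj hG3 hot htx hxo.symm
  have ht := dist_eq_one_iff_adj.mpr hot.symm
  have ha := dist_eq_one_iff_adj.mpr N.triple_a.adj₁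
  have hv := dist_eq_one_iff_adj.mpr N.triple_v.adj₁
  have hrt : ¬G.Adj r t := fun h => by
    have := N.dist_of_adj t h htv (by rintro rfl; exact absurd N.dist_z (by omega))
    omega
  rw [G.dist_comm] at hx
  by_contra! hle
  obtain rfl | ⟨q, hq, hxq⟩ := eq_or_exists_adj_of_dist_le_add_one hG hle
  · cases N
    grind [IsNeighborTriple, G.adj_comm]
  obtain rfl | ⟨q', hq', hxq'⟩ := eq_or_exists_adj_of_dist_le_add_one hG hxq
  · cases N
    grind [IsNeighborTriple, G.adj_comm]
  have hxf : ¬G.Adj f x := fun h => by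
    have := dist_le_dist_add_one' h.symm o
    have := N.dist_f
    omega
  have := eq_or_adj_of_dist_le_one hG hxq'
  cases N
  grind [IsNeighborTriple, G.adj_comm]

theorem ne (N : IsFourGeodesicNhd G o a b e f v w y z r s) (hG3 : G.CliqueFree 3) : a ≠ v := by
  rintro rfl
  exact not_adj_of_adj_of_adj hG3 N.triple_a.adj₂ N.triple_v.adj₂ N.triple_b.adj₃

theorem six_le_card_ndbW [Fintype V] (N : IsFourGeodesicNhd G o a b e f v w y z r s)
    (hG : G.Connected) (hG3 : G.CliqueFree 3) (ht : IsNeighborTriple G o a v t)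
    (htx : G.Adj t x) (hxo : x ≠ o) (hxs : x ≠ s) : 6 ≤ #(ndbW G a b) := by
  classical
  have ht2 := N.two_lt_dist_of_adj hG ht.adj₃ ht.ne₁₃.symm ht.ne₂₃.symm
  have hs2 := N.two_lt_dist hG hG3
  have hx3 := N.three_lt_dist_of_adj_of_adj hG hG3 ht.adj₃ ht.ne₁₃.symm ht.ne₂₃.symm htx hxo hxs
  have hab := dist_eq_one_iff_adj.mpr N.triple_a.adj₂
  have hoa := dist_eq_one_iff_adj.mpr ht.adj₁
  have hwa := dist_eq_one_iff_adj.mpr N.triple_a.adj₃.symm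
  have hwb := dist_eq_two_of_adj_of_adj hG3 N.triple_a.adj₃.symm N.triple_a.adj₂
    N.triple_a.ne₂₃.symm
  have hta := dist_le_dist_add_one' ht.adj₃ a
  have hsa := dist_le_dist_add_one' N.triple_w.adj₃ a
  have hxa := dist_le_dist_add_one' htx a
  have hob := N.dist_b
  rw [G.dist_comm] at hob
  have hself := SimpleGraph.dist_self (G := G) (v := a)
  have hsub : {a, o, w, t, s, x} ⊆ ndbW G a b := by
    simp only [insert_subset_iff, singleton_subset_iff, mem_ndbW]
    omega
  have hcard : #{a, o, w, t, s, x} = 6 := by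
    have hto := dist_eq_one_iff_adj.mpr ht.adj₃.symm
    have hws := N.triple_w.adj₃.ne
    have hat := ht.ne₁₃
    have htx := htx.ne
    have := N.dist_w
    have := N.dist_s
    have hoo := SimpleGraph.dist_self (G := G) (v := o)
    grind
  rw [← hcard]
  exact card_le_card hsub

end IsFourGeodesicNhd

theorem IsCubicNDB.not_isGeodesic_four {V : Type*} [Fintype V] {G : SimpleGraph V}
    [DecidableRel G.Adj] {p : ℕ → V} (H : IsCubicNDB G 5) : ¬IsGeodesic G p 4 := fun hp => by
  have hG := H.cliqueFree_three (by omega)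
  obtain ⟨v, w, y, z, r, s, N⟩ := IsFourGeodesicNhd.exists_of_isGeodesic H hp
  obtain ⟨t, ht⟩ := exists_isNeighborTriple_of_adj_of_adj (H.regular (p 0)) N.triple_a.adj₁.symm
    N.triple_v.adj₁.symm (N.ne hG)
  obtain ⟨x, htx, hxo, hxs⟩ : ∃ x, G.Adj t x ∧ x ≠ p 0 ∧ x ≠ s := by
    obtain ⟨x, x', hx⟩ := exists_isNeighborTriple_of_adj (H.regular t) ht.adj₃.symm
    by_cases hxs : x = s
    · exact ⟨x', hx.adj₃, hx.ne₁₃.symm, hxs ▸ hx.ne₂₃.symm⟩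
    · exact ⟨x, hx.adj₂, hx.ne₁₂.symm, hxs⟩
  have := N.six_le_card_ndbW H.connected hG ht htx hxo hxs
  rw [H.card_ndbW N.triple_a.adj₂] at this
  omega

theorem IsGeodesic.le_three {V : Type*} [Fintype V] {G : SimpleGraph V} [DecidableRel G.Adj]
    {p : ℕ → V} {d : ℕ} (hp : IsGeodesic G p d) (H : IsCubicNDB G (d + 1)) : d ≤ 3 := by
  by_contra! hd
  obtain ⟨y, z, F⟩ := IsFork.exists_of_isGeodesic H hp hd
  obtain rfl : d = 4 := le_antisymm (F.le_four H hp) hd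
  exact H.not_isGeodesic_four hp

/-- `z` is at distance `3` from `v`, and the neighbour `u` of `v` starts a geodesic from `v` to
`z`. -/
structure IsFar {V : Type*} (G : SimpleGraph V) (v u z : V) : Prop where
  adj : G.Adj v u
  dist_eq_three : G.dist z v = 3
  dist_eq_two : G.dist z u = 2

theorem even_card_of_isRegularOfDegree_three {V : Type*} [Fintype V] {G : SimpleGraph V}
    [DecidableRel G.Adj] (hreg : G.IsRegularOfDegree 3) : Even (Fintype.card V) := by
  have hsum := G.sum_degrees_eq_twice_card_edges
  rw [sum_const_nat fun v _ => hreg v, card_univ] at hsum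
  exact ⟨#G.edgeFinset - Fintype.card V, by omega⟩

theorem five_le_card_ndbW {V : Type*} [Fintype V] {G : SimpleGraph V} [DecidableRel G.Adj]
    {a b x z : V} (hG : G.CliqueFree 3) (hdeg : G.degree z = 3) (hxz : G.Adj x z)
    (hab : a ≠ b) (haz : G.dist z a = 2) (hbz : G.dist z b = 2) (hax : 2 < G.dist x a)
    (hbx : 2 < G.dist x b) : 5 ≤ #(ndbW G z x) := by
  classical
  obtain ⟨p, q, hz⟩ := exists_isNeighborTriple_of_adj hdeg hxz.symm
  have hxp := dist_eq_two_of_adj_of_adj hG hxz hz.adj₂ hz.ne₁₂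
  have hxq := dist_eq_two_of_adj_of_adj hG hxz hz.adj₃ hz.ne₁₃
  have hzx := dist_eq_one_iff_adj.mpr hxz.symm
  have hzp := dist_eq_one_iff_adj.mpr hz.adj₂
  have hzq := dist_eq_one_iff_adj.mpr hz.adj₃
  have hzz := SimpleGraph.dist_self (G := G) (v := z)
  have hpq := hz.ne₂₃
  have hcard : #{z, p, q, a, b} = 5 := by grind
  rw [← hcard]
  refine card_le_card ?_
  rw [G.dist_comm] at hxp hxq hzp hzq haz hbz hax hbx
  simp only [insert_subset_iff, singleton_subset_iff, mem_ndbW]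
  omega

namespace IsCubicNDB

variable {V : Type*} [Fintype V] {G : SimpleGraph V} [DecidableRel G.Adj] {γ : ℕ}

theorem exists_one_lt_card_closerNeighbors (H : IsCubicNDB G γ) (hγ : Even γ) (v : V) :
    ∃ z, 1 < #(closerNeighbors G z v) := by
  classical
  by_contra! hle
  have hsum := H.card_add_sum_excess v
  rw [sum_eq_zero fun z _ => Nat.sub_eq_zero_of_le (hle z)] at hsum
  have := even_card_of_isRegularOfDegree_three H.regular
  rw [Nat.even_iff] at this hγ
  omega

end IsCubicNDB

namespace IsFar

section Basic

variable {V : Type*} {G : SimpleGraph V} {b c u v y z : V}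

theorem of_dist_le (h : G.Adj v u) (hz : G.dist z v = 3) (hu : G.dist z u ≤ 2) :
    IsFar G v u z where
  adj := h
  dist_eq_three := hz
  dist_eq_two := by have := dist_le_dist_add_one h.symm z; omega

theorem exists_of_dist_eq_three (hG : G.Connected) (hz : G.dist z v = 3) : ∃ u, IsFar G v u z := by
  obtain ⟨u, hu, hzu⟩ := exists_adj_dist_add_one_eq hG (x := v) (z := z)
    (by rintro rfl; rw [SimpleGraph.dist_self] at hz; omega)
  exact ⟨u, hu, hz, by omega⟩

theorem exists_adj_of_adj (hG : G.Connected) (hd : ∀ x y, G.dist x y ≤ 3) (hz : G.dist z v = 3)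
    (hy : G.Adj z y) (hyv : G.dist y v ≠ 3) : ∃ u, IsFar G v u z ∧ G.Adj u y := by
  have hzy := dist_le_dist_add_one' hy.symm v
  have hyv2 : G.dist y v = 2 := by have := hd y v; omega
  obtain ⟨u, hu, hyu⟩ := exists_adj_dist_add_one_eq hG (x := v) (z := y)
    (by rintro rfl; rw [SimpleGraph.dist_self] at hyv2; omega)
  have hyu1 : G.dist y u = 1 := by omega
  have hzu := dist_le_dist_add_one' hy.symm u
  exact ⟨u, .of_dist_le hu hz (by omega), (dist_eq_one_iff_adj.mp hyu1).symm⟩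

theorem iff_dist_lt (hG : G.Connected) (hd : ∀ x y, G.dist x y ≤ 3)
    (hu : IsNeighborTriple G u v b c) :
    IsFar G v u z ↔ G.dist z u < G.dist z v ∧ z ≠ u ∧ z ≠ b ∧ z ≠ c := by
  constructor
  · intro hz
    have hzv := hz.dist_eq_three
    have hzu := hz.dist_eq_two
    refine ⟨by omega, ?_, ?_, ?_⟩ <;> rintro rfl
    · rw [SimpleGraph.dist_self] at hzu
      omega
    · rw [dist_eq_one_iff_adj.mpr hu.adj₂.symm] at hzu
      omega
    · rw [dist_eq_one_iff_adj.mpr hu.adj₃.symm] at hzu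
      omega
  · rintro ⟨hlt, hzu, hzb, hzc⟩
    have hzv := hd z v
    refine .of_dist_le hu.adj₁.symm ?_ (by omega)
    by_contra hne
    have huz := (eq_or_adj_of_dist_le_one hG (by omega : G.dist z u ≤ 1)).resolve_left hzu
    obtain rfl | rfl | rfl := (hu.adj_iff z).mp huz
    · rw [SimpleGraph.dist_self] at hlt
      omega
    · exact hzb rfl
    · exact hzc rfl

end Basic

variable {V : Type*} [Fintype V] {G : SimpleGraph V} [DecidableRel G.Adj]
variable {a b q u v w x y z : V} {γ : ℕ}

theorem existsUnique (H : IsCubicNDB G 4) (hd : ∀ x y, G.dist x y ≤ 3) (h : G.Adj v u) :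
    ∃! z, IsFar G v u z := by
  classical
  have hG := H.cliqueFree_three (by omega)
  obtain ⟨b, c, hu⟩ := exists_isNeighborTriple_of_adj (H.regular u) h.symm
  have hvb := dist_eq_two_of_adj_of_adj hG h hu.adj₂ hu.ne₁₂
  have hvc := dist_eq_two_of_adj_of_adj hG h hu.adj₃ hu.ne₁₃
  have hub := dist_eq_one_iff_adj.mpr hu.adj₂
  have huc := dist_eq_one_iff_adj.mpr hu.adj₃
  have huv := dist_eq_one_iff_adj.mpr h.symm
  have huu := SimpleGraph.dist_self (G := G) (v := u)
  rw [G.dist_comm] at hvb hvc hub huc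
  have hsub : {u, b, c} ⊆ ndbW G u v := by
    simp only [insert_subset_iff, singleton_subset_iff, mem_ndbW]
    omega
  have hcard : #(ndbW G u v \ {u, b, c}) = 1 := by
    rw [card_sdiff_of_subset hsub, H.card_ndbW h.symm,
      card_eq_three.mpr ⟨u, b, c, hu.adj₂.ne, hu.adj₃.ne, hu.ne₂₃, rfl⟩]
  obtain ⟨z, hz⟩ := card_eq_one.mp hcard
  have hiff (x : V) : IsFar G v u x ↔ x = z := by
    rw [iff_dist_lt H.connected hd hu, ← mem_singleton, ← hz]
    simp only [mem_sdiff, mem_ndbW, mem_insert, mem_singleton, not_or]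
  exact ⟨z, (hiff z).mpr rfl, fun y hy => (hiff y).mp hy⟩

theorem exists_adj_dist_eq_three (H : IsCubicNDB G γ) (hd : ∀ x y, G.dist x y ≤ 3)
    (hz : IsFar G v a z) (huniq : ∀ u, IsFar G v u z → u = a) :
    ∃ y, G.Adj z y ∧ G.dist y v = 3 := by
  by_contra! hfar
  obtain ⟨x₁, x₂, x₃, hx⟩ := exists_isNeighborTriple (H.regular z)
  have adj_of_adj (y : V) (hy : G.Adj z y) : G.Adj a y := by
    obtain ⟨u, hu, huy⟩ := exists_adj_of_adj H.connected hd hz.dist_eq_three hy (hfar y hy)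
    exact huniq u hu ▸ huy
  have ha := isNeighborTriple_of_adj (H.regular a) (adj_of_adj x₁ hx.adj₁)
    (adj_of_adj x₂ hx.adj₂) (adj_of_adj x₃ hx.adj₃) hx.ne₁₂ hx.ne₁₃ hx.ne₂₃
  have hzv : G.Adj z v := (hx.adj_iff v).mpr ((ha.adj_iff v).mp hz.adj.symm)
  rw [← dist_eq_one_iff_adj, hz.dist_eq_three] at hzv
  omega

theorem adj_of_forall_adj (H : IsCubicNDB G γ) (hd : ∀ x y, G.dist x y ≤ 3)
    (hz : IsFar G v a z) (huniq : ∀ u, IsFar G v u z → u = a) (hy : G.Adj z y)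
    (hfar : ∀ w, G.Adj z w → G.dist w v = 3 → w = y) (hq : G.Adj a q) (hqv : q ≠ v) :
    G.Adj z q := by
  obtain ⟨x₁, x₂, hx⟩ := exists_isNeighborTriple_of_adj (H.regular z) hy
  have hzv := hz.dist_eq_three
  have adj_of_adj (w : V) (hw : G.Adj z w) (hwy : w ≠ y) : G.Adj a w ∧ v ≠ w := by
    obtain ⟨u, hu, huw⟩ := exists_adj_of_adj H.connected hd hzv hw (hwy ∘ hfar w hw)
    refine ⟨huniq u hu ▸ huw, ?_⟩
    rintro rfl
    rw [dist_eq_one_iff_adj.mpr hw] at hzv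
    omega
  obtain ⟨hax₁, hvx₁⟩ := adj_of_adj x₁ hx.adj₂ hx.ne₁₂.symm
  obtain ⟨hax₂, hvx₂⟩ := adj_of_adj x₂ hx.adj₃ hx.ne₁₃.symm
  have ha := isNeighborTriple_of_adj (H.regular a) hz.adj.symm hax₁ hax₂ hvx₁ hvx₂ hx.ne₂₃
  obtain rfl | rfl | rfl := (ha.adj_iff q).mp hq
  exacts [absurd rfl hqv, hx.adj₂, hx.adj₃]

theorem of_adj_of_ne (H : IsCubicNDB G 4) (hd : ∀ x y, G.dist x y ≤ 3) (ha : IsFar G v a z)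
    (hb : IsFar G v b z) (hab : a ≠ b) (hu : G.Adj v u) : IsFar G v u z := by
  classical
  have hG := H.cliqueFree_three (by omega)
  obtain ⟨x, hx, -⟩ := existsUnique H hd hu
  obtain rfl | hxz := eq_or_ne x z
  · exact hx
  exfalso
  have hv := isNeighborTriple_of_adj (H.regular v) ha.adj hb.adj hu hab
    (by rintro rfl; exact hxz ((existsUnique H hd hu).unique hx ha))
    (by rintro rfl; exact hxz ((existsUnique H hd hu).unique hx hb))
  have eq_of_isFar {u' y : V} (hy : IsFar G v u' y) (hyz : y ≠ z) : u' = u := by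
    obtain rfl | rfl | rfl := (hv.adj_iff u').mp hy.adj
    · exact absurd ((existsUnique H hd ha.adj).unique hy ha) hyz
    · exact absurd ((existsUnique H hd hb.adj).unique hy hb) hyz
    · rfl
  obtain ⟨y, hxy, hy⟩ := hx.exists_adj_dist_eq_three H hd fun u' hu' => eq_of_isFar hu' hxz
  obtain rfl : y = z := by
    by_contra hyz
    obtain ⟨u', hu'⟩ := exists_of_dist_eq_three H.connected hy
    obtain rfl := eq_of_isFar hu' hyz
    exact hxy.ne ((existsUnique H hd hu).unique hx hu')
  have := five_le_card_ndbW hG (H.regular y) hxy hab ha.dist_eq_two hb.dist_eq_two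
    (not_le.mp fun h => hxz ((existsUnique H hd ha.adj).unique
      (.of_dist_le ha.adj hx.dist_eq_three h) ha))
    (not_le.mp fun h => hxz ((existsUnique H hd hb.adj).unique
      (.of_dist_le hb.adj hx.dist_eq_three h) hb))
  rw [H.card_ndbW hxy.symm] at this
  omega

theorem adj_of_not_adj (H : IsCubicNDB G 4) (hd : ∀ x y, G.dist x y ≤ 3)
    (hinj : ∀ u u' z, IsFar G v u z → IsFar G v u' z → u = u') (hx : IsFar G v a x)
    (hy : IsFar G v b y) (hab : a ≠ b) (hxy : ¬G.Adj x y) (hq : G.Adj a q) (hqv : q ≠ v) :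
    G.Adj x q := by
  have huniq (u : V) (hu : IsFar G v u x) : u = a := hinj u a x hu hx
  obtain ⟨c, hv⟩ := exists_isNeighborTriple_of_adj_of_adj (H.regular v) hx.adj hy.adj hab
  have isFar_third (w : V) (hw : G.Adj x w) (hwv : G.dist w v = 3) : IsFar G v c w := by
    obtain ⟨u, hu⟩ := exists_of_dist_eq_three H.connected hwv
    obtain rfl | rfl | rfl := (hv.adj_iff u).mp hu.adj
    · exact absurd ((existsUnique H hd hu.adj).unique hx hu) hw.ne
    · exact absurd ((existsUnique H hd hu.adj).unique hu hy ▸ hw) hxy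
    · exact hu
  obtain ⟨z, hxz, hzv⟩ := hx.exists_adj_dist_eq_three H hd huniq
  exact hx.adj_of_forall_adj H hd huniq hxz (fun w hw hwv => (existsUnique H hd hv.adj₃).unique
    (isFar_third w hw hwv) (isFar_third z hxz hzv)) hq hqv

theorem eq_of_dist_lt (H : IsCubicNDB G 4) (hd : ∀ x y, G.dist x y ≤ 3)
    (hinj : ∀ u u' z, IsFar G v u z → IsFar G v u' z → u = u') (hx : IsFar G v a x)
    (hy : IsFar G v b y) (hab : a ≠ b) (hxy : ¬G.Adj x y) (hqa : G.dist q a < G.dist q v)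
    (hw : G.Adj v w) (hqw : G.dist q w < G.dist q v) : w = a := by
  have hqv := hd q v
  obtain hle | heq | heq : G.dist q v ≤ 1 ∨ G.dist q v = 2 ∨ G.dist q v = 3 := by omega
  · exact (H.connected.dist_eq_zero_iff.mp (by omega : G.dist q w = 0)).symm.trans
      (H.connected.dist_eq_zero_iff.mp (by omega))
  · have hne : q ≠ v := by
      rintro rfl
      rw [SimpleGraph.dist_self] at heq
      omega
    have haq := (eq_or_adj_of_dist_le_one H.connected (by omega : G.dist q a ≤ 1)).resolve_left
      (by rintro rfl; rw [dist_eq_one_iff_adj.mpr hx.adj.symm] at heq; omega)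
    have hxq := hx.adj_of_not_adj H hd hinj hy hab hxy haq hne
    have hxw := dist_le_dist_add_one' hxq.symm w
    exact hinj w a x (.of_dist_le hw hx.dist_eq_three (by omega)) hx
  · exact hinj w a q (.of_dist_le hw heq (by omega)) (.of_dist_le hx.adj heq (by omega))

theorem adj_of_injective (H : IsCubicNDB G 4) (hd : ∀ x y, G.dist x y ≤ 3)
    (hinj : ∀ u u' z, IsFar G v u z → IsFar G v u' z → u = u') (hx : IsFar G v a x)
    (hy : IsFar G v b y) (hab : a ≠ b) : G.Adj x y := by
  by_contra hxy
  obtain ⟨q, hq⟩ := H.exists_one_lt_card_closerNeighbors (by decide) v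
  obtain ⟨u, hu, u', hu', hne⟩ := one_lt_card.mp hq
  rw [mem_closerNeighbors] at hu hu'
  have ne_and_ne (w w' : V) (hw : G.dist q w < G.dist q v) (hvw' : G.Adj v w')
      (hw' : G.dist q w' < G.dist q v) (hww' : w ≠ w') : w ≠ a ∧ w ≠ b := by
    refine ⟨?_, ?_⟩ <;> rintro rfl
    · exact hww' (hx.eq_of_dist_lt H hd hinj hy hab hxy hw hvw' hw').symm
    · exact hww' (hy.eq_of_dist_lt H hd hinj hx hab.symm (hxy ∘ Adj.symm) hw hvw' hw').symm
  obtain ⟨hua, hub⟩ := ne_and_ne u u' hu.2 hu'.1 hu'.2 hne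
  obtain ⟨hua', hub'⟩ := ne_and_ne u' u hu'.2 hu.1 hu.2 hne.symm
  obtain ⟨c, hv⟩ := exists_isNeighborTriple_of_adj_of_adj (H.regular v) hx.adj hy.adj hab
  have huc := (((hv.adj_iff u).mp hu.1).resolve_left hua).resolve_left hub
  exact hne (huc.trans ((((hv.adj_iff u').mp hu'.1).resolve_left hua').resolve_left hub').symm)

end IsFar

theorem existsUnique_dist_eq_three {V : Type*} [Fintype V] {G : SimpleGraph V}
    [DecidableRel G.Adj] (H : IsCubicNDB G 4) (hd : ∀ x y, G.dist x y ≤ 3) (v : V) :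
    ∃! z, G.dist z v = 3 := by
  obtain ⟨a, b, c, hv⟩ := exists_isNeighborTriple (H.regular v)
  by_cases hinj : ∀ u u' z, IsFar G v u z → IsFar G v u' z → u = u'
  · obtain ⟨x, hx, -⟩ := IsFar.existsUnique H hd hv.adj₁
    obtain ⟨y, hy, -⟩ := IsFar.existsUnique H hd hv.adj₂
    obtain ⟨z, hz, -⟩ := IsFar.existsUnique H hd hv.adj₃
    exact absurd (hy.adj_of_injective H hd hinj hz hv.ne₂₃)
      (not_adj_of_adj_of_adj (H.cliqueFree_three (by omega))
        (hx.adj_of_injective H hd hinj hy hv.ne₁₂) (hx.adj_of_injective H hd hinj hz hv.ne₁₃))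
  · push Not at hinj
    obtain ⟨u, u', z, hu, hu', hne⟩ := hinj
    refine ⟨z, hu.dist_eq_three, fun y hy => ?_⟩
    obtain ⟨w, hw⟩ := IsFar.exists_of_dist_eq_three H.connected hy
    exact (IsFar.existsUnique H hd hw.adj).unique hw (hu.of_adj_of_ne H hd hu' hne hw.adj)

theorem exists_eq_one_of_sum_eq_one {ι : Type*} {s : Finset ι} {f : ι → ℕ}
    (h : ∑ i ∈ s, f i = 1) : ∃ i ∈ s, f i = 1 ∧ ∀ j ∈ s, f j ≠ 0 → j = i := by
  classical
  obtain ⟨i, hi, hne⟩ := exists_ne_zero_of_sum_ne_zero (h ▸ one_ne_zero : ∑ i ∈ s, f i ≠ 0)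
  rw [← add_sum_erase s f hi] at h
  refine ⟨i, hi, by omega, fun j hj hfj => ?_⟩
  by_contra hji
  exact hfj (sum_eq_zero_iff.mp (by omega) j (mem_erase.mpr ⟨hji, hj⟩))

section Card

variable {V : Type*} [Fintype V]

theorem dvd_card_of_forall_mem {C : V → Finset V} {k : ℕ} (hmem : ∀ x, x ∈ C x)
    (heq : ∀ x, ∀ y ∈ C x, C y = C x) (hcard : ∀ x, #(C x) = k) : k ∣ Fintype.card V := by
  classical
  rw [← card_univ, card_eq_sum_card_image C univ]
  refine dvd_sum fun B hB => ?_
  obtain ⟨x, -, rfl⟩ := mem_image.mp hB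
  have hfiber : ({y | C y = C x} : Finset V) = C x := by
    ext y
    rw [mem_filter_univ]
    exact ⟨fun h => h ▸ hmem y, heq x y⟩
  rw [hfiber, hcard]

variable [DecidableEq V] {G : SimpleGraph V} [DecidableRel G.Adj]

-- The partner `y` of `x` and the two common neighbours of `x` and `y` form a `4`-cycle, and these
-- cycles partition the vertices.
theorem four_dvd_card (h : ∀ x, ∃ y ≠ x, #(G.neighborFinset x ∩ G.neighborFinset y) = 2 ∧
    ∀ z ≠ x, 2 ≤ #(G.neighborFinset x ∩ G.neighborFinset z) → z = y) : 4 ∣ Fintype.card V := by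
  choose σ hne hcard huniq using h
  have σ_σ (x : V) : σ (σ x) = x :=
    (huniq (σ x) x (hne x).symm (by rw [inter_comm, hcard])).symm
  have neighborFinset_inter {x p q : V}
      (hpq : G.neighborFinset x ∩ G.neighborFinset (σ x) = {p, q}) (hne' : p ≠ q) :
      σ p = q ∧ G.neighborFinset p ∩ G.neighborFinset q = {x, σ x} := by
    have hp := hpq ▸ mem_insert_self p {q}
    have hq := hpq ▸ mem_insert_of_mem (mem_singleton_self q)
    simp only [mem_inter, mem_neighborFinset] at hp hq
    have hsub : {x, σ x} ⊆ G.neighborFinset p ∩ G.neighborFinset q := by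
      simp only [insert_subset_iff, singleton_subset_iff, mem_inter, mem_neighborFinset]
      exact ⟨⟨hp.1.symm, hq.1.symm⟩, hp.2.symm, hq.2.symm⟩
    have hσ : q = σ p :=
      huniq p q hne'.symm ((card_pair (hne x).symm).symm.le.trans (card_le_card hsub))
    refine ⟨hσ.symm, (eq_of_subset_of_card_le hsub ?_).symm⟩
    rw [card_pair (hne x).symm, hσ, hcard]
  refine dvd_card_of_forall_mem
    (C := fun x => {x, σ x} ∪ G.neighborFinset x ∩ G.neighborFinset (σ x))
    (fun x => mem_union_left _ (mem_insert_self _ _)) (fun x y hy => ?_) fun x => ?_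
  · obtain ⟨p, q, hpq, hN⟩ := card_eq_two.mp (hcard x)
    obtain ⟨hσp, hNp⟩ := neighborFinset_inter hN hpq
    rw [hN] at hy ⊢
    simp only [mem_union, mem_insert, mem_singleton] at hy
    obtain (rfl | rfl) | (rfl | rfl) := hy
    · rw [hN]
    · rw [σ_σ, inter_comm, hN, pair_comm]
    · rw [hσp, hNp, union_comm]
    · rw [← hσp, σ_σ, hσp, inter_comm, hNp, pair_comm, union_comm]
  · have hdisj : Disjoint {x, σ x} (G.neighborFinset x ∩ G.neighborFinset (σ x)) := by
      simp [Finset.disjoint_left]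
    rw [card_union_of_disjoint hdisj, card_pair (hne x).symm, hcard]

end Card

theorem cubeQ3_adj_iff {x y : Fin 3 → Bool} :
    cubeQ3.Adj x y ↔ ∃ i, y = Function.update x i (!x i) := by
  simp only [cubeQ3, fromRel_adj]
  revert x y
  decide

theorem nonempty_iso_cubeQ3_of_surjective {V : Type*} [Fintype V] {G : SimpleGraph V}
    [DecidableRel G.Adj] (hreg : G.IsRegularOfDegree 3) (hcard : Fintype.card V = 8)
    {f : Bool → Bool → Bool → V}
    (hf : ∀ w, ∃ a b c, f a b c = w) (h₁ : ∀ b c, G.Adj (f false b c) (f true b c))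
    (h₂ : ∀ a c, G.Adj (f a false c) (f a true c))
    (h₃ : ∀ a b, G.Adj (f a b false) (f a b true)) : Nonempty (G ≃g cubeQ3) := by
  classical
  let F : (Fin 3 → Bool) → V := fun x => f (x 0) (x 1) (x 2)
  have hF : F.Bijective := by
    refine (Fintype.bijective_iff_surjective_and_card F).mpr ⟨fun w => ?_, ?_⟩
    · obtain ⟨a, b, c, h⟩ := hf w
      exact ⟨![a, b, c], h⟩
    · rw [hcard]
      rfl
  have adj_update (x : Fin 3 → Bool) (i : Fin 3) :
      G.Adj (F x) (F (Function.update x i (!x i))) := by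
    fin_cases i
    · cases h : x 0 <;> simp [F, h, h₁, (h₁ _ _).symm]
    · cases h : x 1 <;> simp [F, h, h₂, (h₂ _ _).symm]
    · cases h : x 2 <;> simp [F, h, h₃, (h₃ _ _).symm]
  have neighborFinset_eq (x : Fin 3 → Bool) :
      univ.image (fun i => F (Function.update x i (!x i))) = G.neighborFinset (F x) := by
    refine eq_of_subset_of_card_le ?_ ?_
    · simp only [image_subset_iff, mem_neighborFinset]
      exact fun i _ => adj_update x i
    · rw [card_neighborFinset_eq_degree, hreg, card_image_of_injective, card_univ,
        Fintype.card_fin]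
      intro i j hij
      have := congrFun (hF.1 hij) i
      by_contra hne
      simp [Function.update_of_ne hne] at this
  refine ⟨(⟨Equiv.ofBijective F hF, ?_⟩ : cubeQ3 ≃g G).symm⟩
  intro x y
  rw [cubeQ3_adj_iff, Equiv.ofBijective_apply, Equiv.ofBijective_apply, ← mem_neighborFinset,
    ← neighborFinset_eq]
  simp only [mem_image, mem_univ, true_and, hF.1.eq_iff, eq_comm]

section CommonNeighbors

variable {V : Type*} [Fintype V] [DecidableEq V] {G : SimpleGraph V} [DecidableRel G.Adj]
variable {x y : V}

theorem inter_neighborFinset_subset_closerNeighbors (hG : G.CliqueFree 3) (hne : y ≠ x) :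
    G.neighborFinset x ∩ G.neighborFinset y ⊆ closerNeighbors G y x := by
  intro p hp
  simp only [mem_inter, mem_neighborFinset] at hp
  rw [mem_closerNeighbors, dist_eq_one_iff_adj.mpr hp.2,
    dist_eq_two_of_adj_of_adj hG hp.2 hp.1.symm hne]
  exact ⟨hp.1, one_lt_two⟩

theorem closerNeighbors_subset_inter_neighborFinset (h : G.dist y x = 2) :
    closerNeighbors G y x ⊆ G.neighborFinset x ∩ G.neighborFinset y := by
  intro p hp
  obtain ⟨hxp, hlt⟩ := mem_closerNeighbors.mp hp
  rw [mem_inter, mem_neighborFinset, mem_neighborFinset]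
  refine ⟨hxp, dist_eq_one_iff_adj.mp ?_⟩
  have := dist_le_dist_add_one hxp.symm y
  omega

end CommonNeighbors

theorem card_closerNeighbors_le_one_of_adj {V : Type*} [Fintype V] {G : SimpleGraph V}
    [DecidableRel G.Adj] {x y : V} (hG : G.Connected) (h : G.Adj x y) :
    #(closerNeighbors G y x) ≤ 1 := by
  have eq_of_mem (p : V) (hp : p ∈ closerNeighbors G y x) : y = p := by
    have := (mem_closerNeighbors.mp hp).2
    rw [dist_eq_one_iff_adj.mpr h.symm] at this
    exact hG.dist_eq_zero_iff.mp (by omega)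
  exact card_le_one.mpr fun p hp q hq => (eq_of_mem p hp).symm.trans (eq_of_mem q hq)

theorem adj_of_dist_eq_two {V : Type*} [Fintype V] {G : SimpleGraph V} [DecidableRel G.Adj]
    {v y z : V} (hreg : G.IsRegularOfDegree 3) (hcard : Fintype.card V = 8)
    (hz : G.dist z v = 3) (hy : G.dist y v = 2) : G.Adj z y := by
  classical
  have card_ball (x : V) : #(insert x (G.neighborFinset x)) = 4 := by
    rw [card_insert_of_notMem (G.notMem_neighborFinset_self x), card_neighborFinset_eq_degree,
      hreg]
  have hdisj : Disjoint (insert v (G.neighborFinset v)) (insert z (G.neighborFinset z)) := by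
    simp only [Finset.disjoint_left, mem_insert, mem_neighborFinset]
    rintro w (rfl | hvw) (rfl | hzw)
    · rw [SimpleGraph.dist_self] at hz
      omega
    · rw [dist_eq_one_iff_adj.mpr hzw] at hz
      omega
    · rw [dist_eq_one_iff_adj.mpr hvw.symm] at hz
      omega
    · have := dist_le_dist_add_one' hzw.symm v
      rw [dist_eq_one_iff_adj.mpr hvw.symm] at this
      omega
  have hunion := eq_univ_of_card (insert v (G.neighborFinset v) ∪ insert z (G.neighborFinset z))
    (by rw [card_union_of_disjoint hdisj, card_ball, card_ball, hcard])
  have hmem := hunion ▸ mem_univ y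
  simp only [mem_union, mem_insert, mem_neighborFinset] at hmem
  obtain (rfl | hvy) | (rfl | hzy) := hmem
  · rw [SimpleGraph.dist_self] at hy
    omega
  · rw [dist_eq_one_iff_adj.mpr hvy.symm] at hy
    omega
  · omega
  · exact hzy

namespace IsCubicNDB

variable {V : Type*} [Fintype V] {G : SimpleGraph V} [DecidableRel G.Adj] {a b c u v z : V}

theorem dist_eq_two_of_dist_eq_three (H : IsCubicNDB G 4) (hd : ∀ x y, G.dist x y ≤ 3)
    (hz : G.dist z v = 3) (hu : G.Adj v u) : G.dist z u = 2 := by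
  obtain ⟨y, hy, -⟩ := IsFar.existsUnique H hd hu
  rw [(existsUnique_dist_eq_three H hd v).unique hz hy.dist_eq_three, hy.dist_eq_two]

theorem card_closerNeighbors_eq_three (H : IsCubicNDB G 4) (hd : ∀ x y, G.dist x y ≤ 3)
    (hz : G.dist z v = 3) : #(closerNeighbors G z v) = 3 := by
  rw [closerNeighbors, filter_true_of_mem, card_neighborFinset_eq_degree, H.regular]
  intro u hu
  rw [hz, H.dist_eq_two_of_dist_eq_three hd hz ((mem_neighborFinset _ _ _).mp hu)]
  omega

theorem exists_card_inter_neighborFinset_eq_two [DecidableEq V] (H : IsCubicNDB G 4)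
    (hd : ∀ x y, G.dist x y ≤ 3) (hcard : Fintype.card V = 10) (x : V) :
    ∃ y ≠ x, #(G.neighborFinset x ∩ G.neighborFinset y) = 2 ∧
      ∀ z ≠ x, 2 ≤ #(G.neighborFinset x ∩ G.neighborFinset z) → z = y := by
  have hG := H.cliqueFree_three (by omega)
  obtain ⟨x', hx', huniq⟩ := existsUnique_dist_eq_three H hd x
  have hx'x : x' ≠ x := by
    rintro rfl
    rw [SimpleGraph.dist_self] at hx'
    omega
  have hsum := H.card_add_sum_excess x
  rw [hcard, ← add_sum_erase _ _ (mem_erase.mpr ⟨hx'x, mem_univ x'⟩),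
    H.card_closerNeighbors_eq_three hd hx'] at hsum
  have hone : ∑ z ∈ (univ.erase x).erase x', (#(closerNeighbors G z x) - 1) = 1 := by omega
  obtain ⟨y, hy, hyx, hy_uniq⟩ := exists_eq_one_of_sum_eq_one hone
  have hyx' := ne_of_mem_erase hy
  have hyx_ne := ne_of_mem_erase (mem_of_mem_erase hy)
  refine ⟨y, hyx_ne, ?_, fun z hzx hz => hy_uniq z (mem_erase.mpr ⟨?_, mem_erase.mpr
    ⟨hzx, mem_univ z⟩⟩) ?_⟩
  · have hy2 : G.dist y x = 2 := by
      have hd' := hd y x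
      have hy3 : G.dist y x ≠ 3 := hyx' ∘ huniq y
      by_contra hy2
      have hadj := (eq_or_adj_of_dist_le_one H.connected (by omega)).resolve_left hyx_ne
      have := card_closerNeighbors_le_one_of_adj H.connected hadj
      omega
    rw [(inter_neighborFinset_subset_closerNeighbors hG hyx_ne).antisymm
      (closerNeighbors_subset_inter_neighborFinset hy2)]
    omega
  · rintro rfl
    obtain ⟨p, hp⟩ := card_pos.mp (zero_lt_two.trans_le hz)
    simp only [mem_inter, mem_neighborFinset] at hp
    rw [dist_eq_two_of_adj_of_adj hG hp.2 hp.1.symm hzx] at hx'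
    omega
  · have := hz.trans (card_le_card (inter_neighborFinset_subset_closerNeighbors hG hzx))
    omega

theorem card_eq_eight (H : IsCubicNDB G 4) (hd : ∀ x y, G.dist x y ≤ 3) : Fintype.card V = 8 := by
  classical
  obtain ⟨v⟩ := H.connected.nonempty
  obtain ⟨z, hz, -⟩ := existsUnique_dist_eq_three H hd v
  obtain ⟨a, b, c, hv⟩ := exists_isNeighborTriple (H.regular v)
  have hle := H.card_add_card_closerNeighbors_le (x := v) (z := z)
    (by rintro rfl; rw [SimpleGraph.dist_self] at hz; omega)
  rw [H.card_closerNeighbors_eq_three hd hz] at hle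
  have hge : 8 ≤ Fintype.card V := by
    have hdisj : Disjoint (ndbW G v a) (ndbW G a v) := by
      simp only [Finset.disjoint_left, mem_ndbW, not_lt]
      exact fun _ => le_of_lt
    have := card_le_univ (ndbW G v a ∪ ndbW G a v)
    rwa [card_union_of_disjoint hdisj, H.card_ndbW hv.adj₁, H.card_ndbW hv.adj₁.symm] at this
  have hne : Fintype.card V ≠ 10 := fun hcard => by
    have := four_dvd_card (H.exists_card_inter_neighborFinset_eq_two hd hcard)
    omega
  obtain ⟨k, hk⟩ := even_card_of_isRegularOfDegree_three H.regular
  omega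

theorem exists_injective_dist_eq_three_iff (H : IsCubicNDB G 4) (hd : ∀ x y, G.dist x y ≤ 3) :
    ∃ σ : V → V, σ.Injective ∧ ∀ x z, G.dist z x = 3 ↔ z = σ x := by
  choose σ hσ huniq using existsUnique_dist_eq_three H hd
  have σ_σ (x : V) : σ (σ x) = x := (huniq _ _ (G.dist_comm.trans (hσ x))).symm
  exact ⟨σ, Function.Involutive.injective σ_σ, fun x z => ⟨huniq x z, fun h => h ▸ hσ x⟩⟩

theorem isNeighborTriple_antipode (H : IsCubicNDB G 4) (hd : ∀ x y, G.dist x y ≤ 3) {σ : V → V}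
    (hσ_inj : σ.Injective) (hσ : ∀ x z, G.dist z x = 3 ↔ z = σ x)
    (hv : IsNeighborTriple G v a b c) : IsNeighborTriple G (σ v) (σ a) (σ b) (σ c) := by
  have antipode_adj {x : V} (hx : G.Adj v x) : G.Adj (σ v) (σ x) :=
    adj_of_dist_eq_two H.regular (H.card_eq_eight hd) ((hσ v _).mpr rfl)
      (H.dist_eq_two_of_dist_eq_three hd ((hσ x _).mpr rfl) hx.symm)
  exact isNeighborTriple_of_adj (H.regular (σ v)) (antipode_adj hv.adj₁)
    (antipode_adj hv.adj₂) (antipode_adj hv.adj₃) (hσ_inj.ne hv.ne₁₂) (hσ_inj.ne hv.ne₁₃)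
    (hσ_inj.ne hv.ne₂₃)

theorem nonempty_iso_cubeQ3 (H : IsCubicNDB G 4) (hd : ∀ x y, G.dist x y ≤ 3) :
    Nonempty (G ≃g cubeQ3) := by
  have hG := H.cliqueFree_three (by omega)
  have hcard := H.card_eq_eight hd
  obtain ⟨σ, hσ_inj, hσ⟩ := H.exists_injective_dist_eq_three_iff hd
  obtain ⟨v⟩ := H.connected.nonempty
  obtain ⟨a, b, c, hv⟩ := exists_isNeighborTriple (H.regular v)
  have adj_antipode {x y : V} (hx : G.Adj v x) (hy : G.Adj v y) (hne : x ≠ y) : G.Adj x (σ y) :=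
    (adj_of_dist_eq_two H.regular hcard ((hσ y _).mpr rfl)
      (dist_eq_two_of_adj_of_adj hG hx.symm hy hne)).symm
  have hσv := H.isNeighborTriple_antipode hd hσ_inj hσ hv
  refine nonempty_iso_cubeQ3_of_surjective H.regular hcard (f := fun
    | false, false, false => v
    | true, false, false => a
    | false, true, false => b
    | false, false, true => c
    | false, true, true => σ a
    | true, false, true => σ b
    | true, true, false => σ c
    | true, true, true => σ v) (fun w => ?_) ?_ ?_ ?_
  · simp only [Bool.exists_bool]
    have hwv := hd w v
    by_cases h3 : G.dist w v = 3
    · have := (hσ v w).mp h3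
      tauto
    by_cases h2 : G.dist w v = 2
    · have := (hσv.adj_iff w).mp (adj_of_dist_eq_two H.regular hcard ((hσ v _).mpr rfl) h2)
      tauto
    have := eq_or_adj_of_dist_le_one H.connected (by omega : G.dist w v ≤ 1)
    rw [hv.adj_iff] at this
    tauto
  · simp only [Bool.forall_bool]
    exact ⟨⟨hv.adj₁, adj_antipode hv.adj₃ hv.adj₂ hv.ne₂₃.symm⟩,
      adj_antipode hv.adj₂ hv.adj₃ hv.ne₂₃, hσv.adj₁.symm⟩
  · simp only [Bool.forall_bool]
    exact ⟨⟨hv.adj₂, adj_antipode hv.adj₃ hv.adj₁ hv.ne₁₃.symm⟩,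
      adj_antipode hv.adj₁ hv.adj₃ hv.ne₁₃, hσv.adj₂.symm⟩
  · simp only [Bool.forall_bool]
    exact ⟨⟨hv.adj₃, adj_antipode hv.adj₂ hv.adj₁ hv.ne₁₂.symm⟩,
      adj_antipode hv.adj₁ hv.adj₂ hv.ne₁₂, hσv.adj₃.symm⟩

end IsCubicNDB

/-- A regular NDB graph with valency `3`, diameter `d ≥ 3` and
`γ = d + 1` is isomorphic to the 3-dimensional hypercube graph `Q₃`. -/
theorem stmt_13 {V : Type*} [Fintype V] (G : SimpleGraph V) [DecidableRel G.Adj]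
    (hconn : G.Connected) (d : ℕ) (hreg : G.IsRegularOfDegree 3)
    (hd : 3 ≤ d) (hdiam : HasDiam G d) (hndb : IsNDB G (d + 1)) :
    Nonempty (G ≃g cubeQ3) := by
  have H : IsCubicNDB G (d + 1) := ⟨hconn, hreg, hndb⟩
  obtain ⟨hle, u, v, huv⟩ := hdiam
  obtain ⟨p, hp, -⟩ := IsGeodesic.exists_of_connected hconn u v
  rw [huv] at hp
  obtain rfl : d = 3 := le_antisymm (hp.le_three H) hd
  exact H.nonempty_iso_cubeQ3 hle
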